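/- arXiv:2112.06762 — 5 statements merged into one kernel-verified Lean document; each statement's English description precedes it below -/
import Mathlib

section
/- In Graded Rational Pavelka logic GRPL, the rules ⟨q, φ⟩ ⊳ ⟨1, q̄→φ⟩ and ⟨1, q̄→φ⟩ ⊳ ⟨q, φ⟩ are derivable: for every fuzzy theory Γ, every formula φ of the language of RPL and every rational q ∈ [0,1], Γ proves the graded formula ⟨q, φ⟩ in GRPL if and only if Γ proves the graded formula ⟨1, q̄→φ⟩ in GRPL. -/
/-- The rationals in the unit interval: indices of the truth constants of RPL,
and grades of graded formulas of GRPL. -/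
abbrev UQ := {q : ℚ // 0 ≤ q ∧ q ≤ 1}

instance : Zero UQ := ⟨⟨0, by norm_num⟩⟩
instance : One UQ := ⟨⟨1, by norm_num⟩⟩

/-- Łukasiewicz negation on the rational unit interval: `¬q = 1 - q`. -/
def UQ.lneg (q : UQ) : UQ :=
  ⟨1 - q.1, by obtain ⟨h0, h1⟩ := q.2; constructor <;> linarith⟩

/-- Łukasiewicz implication on the rational unit interval: `q → r = min 1 (1 - q + r)`. -/
def UQ.limp (q r : UQ) : UQ :=
  ⟨min 1 (1 - q.1 + r.1), by
    obtain ⟨hq0, hq1⟩ := q.2; obtain ⟨hr0, hr1⟩ := r.2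
    exact ⟨le_min (by norm_num) (by linarith), min_le_left _ _⟩⟩

/-- Łukasiewicz strong conjunction on the rational unit interval:
`q ⊙ r = max 0 (q + r - 1)`. -/
def UQ.lmul (q r : UQ) : UQ :=
  ⟨max 0 (q.1 + r.1 - 1), by
    obtain ⟨hq0, hq1⟩ := q.2; obtain ⟨hr0, hr1⟩ := r.2
    exact ⟨le_max_left _ _, max_le (by norm_num) (by linarith)⟩⟩

/-- Formulas of the language of RPL: propositional variables, a truth constant `q̄` for
each rational `q ∈ [0,1]`, negation and implication. -/
inductive Fml : Type
  | var : ℕ → Fml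
  | const : UQ → Fml
  | neg : Fml → Fml
  | imp : Fml → Fml → Fml

/-- Strong conjunction, defined: `α ⊙ β := ¬(α → ¬β)`. -/
def Fml.odot (a b : Fml) : Fml := Fml.neg (a.imp b.neg)

/-- (Min-)conjunction, defined: `α ∧ β := α ⊙ (α → β)`. -/
def Fml.conj (a b : Fml) : Fml := a.odot (a.imp b)

/-- Equivalence `α ≡ β`, the conjunction of the two implications. -/
def Fml.eqv (a b : Fml) : Fml := (a.imp b).conj (b.imp a)

/-- Instances of the axiom schemata (A1)-(A4) of Łukasiewicz logic Ł. -/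
inductive IsLukAxiom : Fml → Prop
  | a1 (φ ψ : Fml) : IsLukAxiom (φ.imp (ψ.imp φ))
  | a2 (φ ψ χ : Fml) : IsLukAxiom ((φ.imp ψ).imp ((ψ.imp χ).imp (φ.imp χ)))
  | a3 (φ ψ : Fml) : IsLukAxiom (((φ.imp ψ).imp ψ).imp ((ψ.imp φ).imp φ))
  | a4 (φ ψ : Fml) : IsLukAxiom ((φ.neg.imp ψ.neg).imp (ψ.imp φ))

/-- Axioms of Rational Pavelka logic RPL: the axioms of Ł together with the
bookkeeping axioms (with `1̄ ≡ 1` and `0̄ ≡ 0` rendered as the provability of `1̄`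
and of `¬0̄`, since the basic language `{¬, →}` has no primitive truth constants). -/
inductive IsRPLAxiom : Fml → Prop
  | luk {φ : Fml} : IsLukAxiom φ → IsRPLAxiom φ
  | book_imp (q r : UQ) :
      IsRPLAxiom (((Fml.const q).imp (Fml.const r)).eqv (Fml.const (q.limp r)))
  | book_neg (q : UQ) : IsRPLAxiom ((Fml.const q).neg.eqv (Fml.const q.lneg))
  | book_one : IsRPLAxiom (Fml.const 1)
  | book_zero : IsRPLAxiom (Fml.const 0).neg

/-- `L` is a proof in RPL from the theory `T`: every member of the list is an axiom of RPL,
a member of `T`, or follows from two earlier members by modus ponens. -/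
def IsRPLProofFrom (T : Set Fml) (L : List Fml) : Prop :=
  ∀ i : Fin L.length, IsRPLAxiom (L.get i) ∨ L.get i ∈ T ∨
    ∃ j k : Fin L.length, j < i ∧ k < i ∧ L.get k = (L.get j).imp (L.get i)

/-- `T ⊢_RPL φ`: some proof in RPL from `T` has `φ` as its last element. -/
def RPLProv (T : Set Fml) (φ : Fml) : Prop :=
  ∃ L : List Fml, IsRPLProofFrom T L ∧ L.getLast? = some φ

/-- The fuzzy set of axioms of GRPL: (A) instances of the axioms of Ł in grade 1;
(B) each constant `q̄` in grade `q`; (C) the bookkeeping axioms in grade 1;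
(D) all formulas in grade 0. -/
inductive IsGRPLAxiom : UQ → Fml → Prop
  | luk {φ : Fml} : IsLukAxiom φ → IsGRPLAxiom 1 φ
  | const (q : UQ) : IsGRPLAxiom q (Fml.const q)
  | book_neg (q : UQ) : IsGRPLAxiom 1 ((Fml.const q).neg.eqv (Fml.const q.lneg))
  | book_imp (q r : UQ) :
      IsGRPLAxiom 1 (((Fml.const q).imp (Fml.const r)).eqv (Fml.const (q.limp r)))
  | zero (φ : Fml) : IsGRPLAxiom 0 φ

/-- `L` is a graded proof in GRPL from the set `T` of graded formulas: every member is a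
graded axiom of GRPL, a member of `T`, or follows from earlier members by graded modus
ponens (from `⟨q,φ⟩` and `⟨r,φ→ψ⟩` derive `⟨q⊙r,ψ⟩`) or by lifting (from `⟨q,φ⟩` derive
`⟨r→q, r̄→φ⟩`). -/
def IsGRPLProofFrom (T : Set (UQ × Fml)) (L : List (UQ × Fml)) : Prop :=
  ∀ i : Fin L.length, IsGRPLAxiom (L.get i).1 (L.get i).2 ∨ L.get i ∈ T ∨
    (∃ j k : Fin L.length, j < i ∧ k < i ∧
      (L.get k).2 = (L.get j).2.imp (L.get i).2 ∧
      (L.get i).1 = UQ.lmul (L.get j).1 (L.get k).1) ∨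
    (∃ j : Fin L.length, ∃ r : UQ, j < i ∧
      L.get i = (UQ.limp r (L.get j).1, (Fml.const r).imp (L.get j).2))

/-- `T ⊢_GRPL ⟨q,φ⟩`: some graded proof in GRPL from `T` has `⟨q,φ⟩` as its last element. -/
def GRPLProv (T : Set (UQ × Fml)) (p : UQ × Fml) : Prop :=
  ∃ L : List (UQ × Fml), IsGRPLProofFrom T L ∧ L.getLast? = some p

/-- The set of graded hypotheses `⟨Γ(ψ), ψ⟩` determined by a fuzzy theory `Γ`. -/
def FuzzyThy (Γ : Fml → UQ) : Set (UQ × Fml) := {p | p.1 = Γ p.2}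

/-- An assignment into the standard MV-algebra `[0,1]_Ł` takes values in `[0,1]`. -/
def IsAssignment (v : ℕ → ℝ) : Prop := ∀ n, v n ∈ Set.Icc (0 : ℝ) 1

/-- Evaluation of a formula in the standard MV-algebra `[0,1]_Ł`, with each rational
constant interpreted canonically. -/
noncomputable def eval (v : ℕ → ℝ) : Fml → ℝ
  | Fml.var n => v n
  | Fml.const q => (q.1 : ℝ)
  | Fml.neg φ => 1 - eval v φ
  | Fml.imp φ ψ => min 1 (1 - eval v φ + eval v ψ)

/-- Old steps of a graded proof stay valid after appending, so it is enough to check the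
new last step. -/
theorem isGRPLProofFrom_snoc {T : Set (UQ × Fml)} {L : List (UQ × Fml)} {p : UQ × Fml}
    (hL : IsGRPLProofFrom T L)
    (hp : IsGRPLAxiom p.1 p.2 ∨ p ∈ T ∨
      (∃ j k : Fin L.length, (L.get k).2 = (L.get j).2.imp p.2 ∧
        p.1 = UQ.lmul (L.get j).1 (L.get k).1) ∨
      (∃ j : Fin L.length, ∃ r : UQ,
        p = (UQ.limp r (L.get j).1, (Fml.const r).imp (L.get j).2))) :
    IsGRPLProofFrom T (L ++ [p]) := by
  have hlen : (L ++ [p]).length = L.length + 1 := by simp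
  have hold : ∀ j : Fin L.length, (L ++ [p]).get ⟨j.1, by omega⟩ = L.get j := by
    intro j
    simp [List.getElem_append_left j.2]
  rintro ⟨i, hi⟩
  by_cases h : i < L.length
  · have e := hold ⟨i, h⟩
    simp only at e
    rw [e]
    rcases hL ⟨i, h⟩ with h1 | h1 | ⟨j, k, hj, hk, h1, h2⟩ | ⟨j, r, hj, h1⟩
    · exact Or.inl h1
    · exact Or.inr (Or.inl h1)
    · refine Or.inr (Or.inr (Or.inl ⟨⟨j.1, by omega⟩, ⟨k.1, by omega⟩, hj, hk, ?_⟩))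
      rw [hold j, hold k]
      exact ⟨h1, h2⟩
    · refine Or.inr (Or.inr (Or.inr ⟨⟨j.1, by omega⟩, r, hj, ?_⟩))
      rw [hold j]
      exact h1
  · obtain rfl : i = L.length := by omega
    have e : (L ++ [p]).get ⟨L.length, hi⟩ = p := by simp
    rw [e]
    rcases hp with h1 | h1 | ⟨j, k, h1, h2⟩ | ⟨j, r, h1⟩
    · exact Or.inl h1
    · exact Or.inr (Or.inl h1)
    · refine Or.inr (Or.inr (Or.inl ⟨⟨j.1, by omega⟩, ⟨k.1, by omega⟩, j.2, k.2, ?_⟩))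
      rw [hold j, hold k]
      exact ⟨h1, h2⟩
    · refine Or.inr (Or.inr (Or.inr ⟨⟨j.1, by omega⟩, r, j.2, ?_⟩))
      rw [hold j]
      exact h1

theorem UQ.limp_self (q : UQ) : UQ.limp q q = 1 := by
  apply Subtype.ext
  change min (1 : ℚ) (1 - q.1 + q.1) = 1
  simp

theorem UQ.lmul_one' (q : UQ) : UQ.lmul q 1 = q := by
  apply Subtype.ext
  change max (0 : ℚ) (q.1 + 1 - 1) = q.1
  simpa using q.2.1

/-- In GRPL, the rules `⟨q,φ⟩ ⊳ ⟨1, q̄→φ⟩` and `⟨1, q̄→φ⟩ ⊳ ⟨q,φ⟩` are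
derivable: for every fuzzy theory `Γ`, every formula `φ` and every rational `q ∈ [0,1]`,
`Γ ⊢_GRPL ⟨q,φ⟩` iff `Γ ⊢_GRPL ⟨1, q̄→φ⟩`. -/
theorem grpl_push_pull (Γ : Fml → UQ) (φ : Fml) (q : UQ) :
    GRPLProv (FuzzyThy Γ) (q, φ) ↔ GRPLProv (FuzzyThy Γ) (1, (Fml.const q).imp φ) := by
  constructor
  · rintro ⟨L, hL, hlast⟩
    obtain ⟨j, hj, e⟩ := List.mem_iff_getElem.1 (List.mem_of_getLast? hlast)
    refine ⟨L ++ [(1, (Fml.const q).imp φ)], isGRPLProofFrom_snoc hL ?_, by simp⟩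
    refine Or.inr (Or.inr (Or.inr ⟨⟨j, hj⟩, q, ?_⟩))
    simp only [List.get_eq_getElem, e, UQ.limp_self]
  · rintro ⟨L, hL, hlast⟩
    obtain ⟨k, hk, e⟩ := List.mem_iff_getElem.1 (List.mem_of_getLast? hlast)
    have h1 : IsGRPLProofFrom (FuzzyThy Γ) (L ++ [(q, Fml.const q)]) :=
      isGRPLProofFrom_snoc hL (Or.inl (IsGRPLAxiom.const q))
    refine ⟨L ++ [(q, Fml.const q)] ++ [(q, φ)], isGRPLProofFrom_snoc h1 ?_, by simp⟩
    refine Or.inr (Or.inr (Or.inl ⟨⟨L.length, by simp⟩, ⟨k, by simp; omega⟩, ?_⟩))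
    simp [List.getElem_append_left hk, e, UQ.lmul_one']
end

section
/- Let T₀ be a set of formulas of the language of RPL, let T = { ⟨1, ψ⟩ : ψ ∈ T₀ }, and let φ be a formula of the language of RPL. If T ⊢_GRPL ⟨1, φ⟩, then there exists a graded proof P of ⟨1, φ⟩ from T in GRPL such that every graded formula occurring in P has grade 1. -/
/-- Provability in grade one: Hilbert-style derivability from the grade-one axioms. -/
inductive Prv (T : Set Fml) : Fml → Prop
  | luk {φ : Fml} : IsLukAxiom φ → Prv T φ
  | one : Prv T (Fml.const 1)
  | book_neg (q : UQ) : Prv T ((Fml.const q).neg.eqv (Fml.const q.lneg))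
  | book_imp (q r : UQ) :
      Prv T (((Fml.const q).imp (Fml.const r)).eqv (Fml.const (q.limp r)))
  | hyp {φ : Fml} : φ ∈ T → Prv T φ
  | mp {φ ψ : Fml} : Prv T φ → Prv T (φ.imp ψ) → Prv T ψ

namespace Prv

variable {T : Set Fml} {a b c d : Fml}

theorem k (a b : Fml) : Prv T (a.imp (b.imp a)) := luk (.a1 a b)

theorem a2 (a b c : Fml) : Prv T ((a.imp b).imp ((b.imp c).imp (a.imp c))) := luk (.a2 a b c)

theorem a4 (a b : Fml) : Prv T ((a.neg.imp b.neg).imp (b.imp a)) := luk (.a4 a b)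

theorem wk (h : Prv T a) (b : Fml) : Prv T (b.imp a) := mp h (k a b)

theorem syl (h : Prv T (a.imp b)) (h' : Prv T (b.imp c)) : Prv T (a.imp c) :=
  mp h' (mp h (a2 a b c))

theorem app (a b : Fml) : Prv T (a.imp ((a.imp b).imp b)) :=
  syl (k a (b.imp a)) (luk (.a3 b a))

theorem exch (a b c : Fml) : Prv T ((a.imp (b.imp c)).imp (b.imp (a.imp c))) :=
  syl (a2 a (b.imp c) c) (mp (app b c) (a2 b ((b.imp c).imp c) (a.imp c)))

theorem ex (h : Prv T (a.imp (b.imp c))) : Prv T (b.imp (a.imp c)) := mp h (exch a b c)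

theorem idd (a : Fml) : Prv T (a.imp a) := mp (k a a) (ex (k a (a.imp (a.imp a))))

theorem bb (a b c : Fml) : Prv T ((b.imp c).imp ((a.imp b).imp (a.imp c))) := ex (a2 a b c)

theorem efq (a b : Fml) : Prv T (a.neg.imp (a.imp b)) := syl (k a.neg b.neg) (a4 b a)

theorem dne (a : Fml) : Prv T (a.neg.neg.imp a) :=
  mp (idd a) (ex (syl (efq a.neg (a.imp a).neg) (a4 a (a.imp a))))

theorem dni (a : Fml) : Prv T (a.imp a.neg.neg) := mp (dne a.neg) (a4 a.neg.neg a)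

theorem contra (a b : Fml) : Prv T ((a.imp b).imp (b.neg.imp a.neg)) :=
  syl (syl (mp (dne a) (a2 a.neg.neg a b)) (mp (dni b) (bb a.neg.neg b b.neg.neg)))
    (a4 a.neg b.neg)

theorem con (h : Prv T (a.imp b)) : Prv T (b.neg.imp a.neg) := mp h (contra a b)

theorem odot_left (h : Prv T (a.odot b)) : Prv T a :=
  mp h (syl (con (efq a b.neg)) (dne a))

theorem odot_right (h : Prv T (a.odot b)) : Prv T b :=
  mp h (syl (con (k b.neg a)) (dne b))

theorem eqv_left (h : Prv T (a.eqv b)) : Prv T (a.imp b) := odot_left h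

theorem eqv_right (h : Prv T (a.eqv b)) : Prv T (b.imp a) :=
  mp (odot_left h) (odot_right h)

theorem neg_zero : Prv T (Fml.const 0).neg := by
  have h : UQ.lneg 0 = 1 := Subtype.ext (sub_zero (1 : ℚ))
  have := eqv_right (book_neg (T := T) 0)
  rw [h] at this
  exact mp one this

theorem zero_imp (a : Fml) : Prv T ((Fml.const 0).imp a) := mp neg_zero (efq _ a)

theorem lneg_lneg (q : UQ) : q.lneg.lneg = q := Subtype.ext (sub_sub_cancel (1 : ℚ) q.1)

theorem lmul_eq (q r : UQ) : UQ.lmul q r = (UQ.limp r q.lneg).lneg := by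
  apply Subtype.ext
  simp only [UQ.lmul, UQ.limp, UQ.lneg]
  rcases le_total (q.1 + r.1) 1 with h | h
  · rw [max_eq_left (by linarith), min_eq_left (by linarith)]; ring
  · rw [max_eq_right (by linarith), min_eq_right (by linarith)]; ring

theorem gmp {q r : UQ} (h : Prv T ((Fml.const q).imp a))
    (h' : Prv T ((Fml.const r).imp (a.imp b))) :
    Prv T ((Fml.const (UQ.lmul q r)).imp b) := by
  rw [lmul_eq]
  have h1 : Prv T ((Fml.const r).imp ((Fml.const q).imp b)) := syl h' (mp h (a2 _ _ _))
  have h2 : Prv T (b.neg.imp ((Fml.const r).imp (Fml.const q).neg)) := ex (syl h1 (contra _ _))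
  have h3 : Prv T (b.neg.imp ((Fml.const r).imp (Fml.const q.lneg))) :=
    syl h2 (mp (eqv_left (book_neg q)) (bb _ _ _))
  have h4 := syl h3 (eqv_left (book_imp r q.lneg))
  have h5 := eqv_right (book_neg (T := T) (UQ.limp r q.lneg).lneg)
  rw [lneg_lneg] at h5
  exact mp (syl h4 h5) (a4 _ _)

theorem lift {q : UQ} (r : UQ) (h : Prv T ((Fml.const q).imp a)) :
    Prv T ((Fml.const (UQ.limp r q)).imp ((Fml.const r).imp a)) :=
  syl (eqv_right (book_imp r q)) (mp h (bb _ _ _))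

end Prv

theorem prv_of_graded (T₀ : Set Fml) (L : List (UQ × Fml))
    (hL : IsGRPLProofFrom ((fun ψ : Fml => ((1 : UQ), ψ)) '' T₀) L) :
    ∀ (n : ℕ) (i : Fin L.length), i.1 = n →
      Prv T₀ ((Fml.const (L.get i).1).imp (L.get i).2) := by
  intro n
  induction n using Nat.strong_induction_on with
  | _ n ih =>
    intro i hi
    rcases hL i with h | h | ⟨j, k, hj, hk, h1, h2⟩ | ⟨j, r, hj, h⟩
    · generalize (L.get i).1 = q at h ⊢
      generalize (L.get i).2 = a at h ⊢
      cases h with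
      | luk h => exact (Prv.luk h).wk _
      | const q => exact Prv.idd _
      | book_neg q => exact (Prv.book_neg q).wk _
      | book_imp q r => exact (Prv.book_imp q r).wk _
      | zero a => exact Prv.zero_imp _
    · obtain ⟨a, ha, h⟩ := h
      rw [← h]
      exact (Prv.hyp ha).wk _
    · have hj' := ih j.1 (hi ▸ hj) j rfl
      have hk' := ih k.1 (hi ▸ hk) k rfl
      rw [h1] at hk'
      rw [h2]
      exact hj'.gmp hk'
    · have hj' := ih j.1 (hi ▸ hj) j rfl
      rw [h]
      exact hj'.lift r

theorem proof_append {T : Set (UQ × Fml)} {L M : List (UQ × Fml)}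
    (hL : IsGRPLProofFrom T L) (hM : IsGRPLProofFrom T M) : IsGRPLProofFrom T (L ++ M) := by
  rintro ⟨i, hi⟩
  have hlen : (L ++ M).length = L.length + M.length := List.length_append
  by_cases h : i < L.length
  · have e : ∀ j : Fin L.length, (L ++ M).get ⟨j.1, by omega⟩ = L.get j := by
      intro j
      simp
    have := e ⟨i, h⟩
    simp only at this
    rw [this]
    rcases hL ⟨i, h⟩ with h | h | ⟨j, k, hj, hk, h1, h2⟩ | ⟨j, r, hj, h⟩
    · exact .inl h
    · exact .inr (.inl h)
    · refine .inr (.inr (.inl ⟨⟨j.1, by omega⟩, ⟨k.1, by omega⟩, hj, hk, ?_⟩))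
      rw [e, e]
      exact ⟨h1, h2⟩
    · refine .inr (.inr (.inr ⟨⟨j.1, by omega⟩, r, hj, ?_⟩))
      rw [e]
      exact h
  · have e : ∀ j : Fin M.length, (L ++ M).get ⟨L.length + j.1, by omega⟩ = M.get j := by
      intro j
      simp
    obtain ⟨m, rfl⟩ : ∃ m, i = L.length + m := ⟨i - L.length, by omega⟩
    have hm : m < M.length := by omega
    have := e ⟨m, hm⟩
    simp only at this
    rw [this]
    rcases hM ⟨m, hm⟩ with h | h | ⟨j, k, hj, hk, h1, h2⟩ | ⟨j, r, hj, h⟩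
    · exact .inl h
    · exact .inr (.inl h)
    · refine .inr (.inr (.inl ⟨⟨L.length + j.1, by omega⟩, ⟨L.length + k.1, by omega⟩,
        Nat.add_lt_add_left hj _, Nat.add_lt_add_left hk _, ?_⟩))
      rw [e, e]
      exact ⟨h1, h2⟩
    · refine .inr (.inr (.inr ⟨⟨L.length + j.1, by omega⟩, r, Nat.add_lt_add_left hj _, ?_⟩))
      rw [e]
      exact h

theorem proof_snoc_mp {T : Set (UQ × Fml)} {L : List (UQ × Fml)} {a b : Fml}
    (hL : IsGRPLProofFrom T L) (ha : (1, a) ∈ L) (hab : (1, a.imp b) ∈ L) :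
    IsGRPLProofFrom T (L ++ [(1, b)]) := by
  rintro ⟨i, hi⟩
  have hlen : (L ++ [((1 : UQ), b)]).length = L.length + 1 := by simp
  have e : ∀ j : Fin L.length, (L ++ [((1 : UQ), b)]).get ⟨j.1, by omega⟩ = L.get j := by
    intro j
    simp
  by_cases h : i < L.length
  · have := e ⟨i, h⟩
    simp only at this
    rw [this]
    rcases hL ⟨i, h⟩ with h | h | ⟨j, k, hj, hk, h1, h2⟩ | ⟨j, r, hj, h⟩
    · exact .inl h
    · exact .inr (.inl h)
    · refine .inr (.inr (.inl ⟨⟨j.1, by omega⟩, ⟨k.1, by omega⟩, hj, hk, ?_⟩))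
      rw [e, e]
      exact ⟨h1, h2⟩
    · refine .inr (.inr (.inr ⟨⟨j.1, by omega⟩, r, hj, ?_⟩))
      rw [e]
      exact h
  · obtain rfl : i = L.length := by omega
    obtain ⟨j, hj⟩ := List.get_of_mem ha
    obtain ⟨k, hk⟩ := List.get_of_mem hab
    refine .inr (.inr (.inl ⟨⟨j.1, by omega⟩, ⟨k.1, by omega⟩, j.2, k.2, ?_⟩))
    rw [e, e, hj, hk]
    have : (L ++ [((1 : UQ), b)]).get ⟨L.length, hi⟩ = (1, b) := by simp
    rw [this]
    refine ⟨rfl, Subtype.ext ?_⟩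
    change (1 : ℚ) = max 0 (1 + 1 - 1)
    norm_num

theorem graded_of_prv {T₀ : Set Fml} {φ : Fml} (h : Prv T₀ φ) :
    ∃ P : List (UQ × Fml),
      IsGRPLProofFrom ((fun ψ : Fml => ((1 : UQ), ψ)) '' T₀) P ∧
      P.getLast? = some (1, φ) ∧ ∀ p ∈ P, p.1 = (1 : UQ) := by
  have single : ∀ a : Fml, (IsGRPLAxiom 1 a ∨ a ∈ T₀) → ∃ P : List (UQ × Fml),
      IsGRPLProofFrom ((fun ψ : Fml => ((1 : UQ), ψ)) '' T₀) P ∧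
      P.getLast? = some (1, a) ∧ ∀ p ∈ P, p.1 = (1 : UQ) := by
    intro a ha
    refine ⟨[(1, a)], ?_, rfl, by simp⟩
    rintro ⟨i, hi⟩
    obtain rfl : i = 0 := by simpa using hi
    rcases ha with ha | ha
    · exact .inl ha
    · exact .inr (.inl ⟨a, ha, rfl⟩)
  induction h with
  | luk h => exact single _ (.inl (.luk h))
  | one => exact single _ (.inl (.const 1))
  | book_neg q => exact single _ (.inl (.book_neg q))
  | book_imp q r => exact single _ (.inl (.book_imp q r))
  | hyp h => exact single _ (.inr h)
  | mp _ _ ih1 ih2 =>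
    obtain ⟨P, hP, lP, gP⟩ := ih1
    obtain ⟨Q, hQ, lQ, gQ⟩ := ih2
    refine ⟨P ++ Q ++ [(1, _)], proof_snoc_mp (proof_append hP hQ)
      (List.mem_append_left _ (List.mem_of_getLast? lP))
      (List.mem_append_right _ (List.mem_of_getLast? lQ)), by simp, ?_⟩
    intro p hp
    simp only [List.mem_append, List.mem_singleton] at hp
    rcases hp with (hp | hp) | rfl
    · exact gP p hp
    · exact gQ p hp
    · rfl

/-- if `T = { ⟨1,ψ⟩ : ψ ∈ T₀ }` and `T ⊢_GRPL ⟨1,φ⟩`, then there is a graded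
proof `P` of `⟨1,φ⟩` from `T` in GRPL in which every graded formula has grade `1`. -/
theorem grade_one_proof_exists (T₀ : Set Fml) (φ : Fml)
    (h : GRPLProv ((fun ψ : Fml => ((1 : UQ), ψ)) '' T₀) (1, φ)) :
    ∃ P : List (UQ × Fml),
      IsGRPLProofFrom ((fun ψ : Fml => ((1 : UQ), ψ)) '' T₀) P ∧
      P.getLast? = some (1, φ) ∧ ∀ p ∈ P, p.1 = (1 : UQ) := by
  obtain ⟨L, hL, hl⟩ := h
  obtain ⟨i, hi⟩ := List.get_of_mem (List.mem_of_getLast? hl)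
  have := prv_of_graded T₀ L hL i.1 i rfl
  rw [hi] at this
  exact graded_of_prv (Prv.mp Prv.one this)
end

section
/- RPL embeds in GRPL: for every set T ∪ {φ} of formulas of the language of RPL, T ⊢_RPL φ if and only if { ⟨1, ψ⟩ : ψ ∈ T } ⊢_GRPL ⟨1, φ⟩. -/
/-- A derivation as a list each of whose members is justified by the earlier ones. -/
def GoodList {α : Type} (S : Set α → α → Prop) (L : List α) : Prop :=
  ∀ i (h : i < L.length), S {x | ∃ j, ∃ hj : j < L.length, j < i ∧ L[j] = x} L[i]

theorem GoodList.sound {α : Type} {S : Set α → α → Prop} {L : List α} (hL : GoodList S L)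
    {Q : α → Prop} (hQ : ∀ A x, (∀ a ∈ A, Q a) → S A x → Q x) :
    ∀ i (h : i < L.length), Q L[i] := by
  intro i
  induction i using Nat.strong_induction_on with
  | _ i ih =>
    intro h
    refine hQ _ _ ?_ (hL i h)
    rintro a ⟨j, hj, hji, rfl⟩
    exact ih j hji hj

theorem GoodList.append {α : Type} {S : Set α → α → Prop}
    (mono : ∀ A B x, A ⊆ B → S A x → S B x) {L M : List α}
    (hL : GoodList S L) (hM : GoodList S M) : GoodList S (L ++ M) := by
  intro i h
  by_cases hi : i < L.length
  · rw [List.getElem_append_left hi]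
    refine mono _ _ _ ?_ (hL i hi)
    rintro a ⟨j, hj, hji, rfl⟩
    exact ⟨j, by simp; omega, hji, List.getElem_append_left hj⟩
  · rw [List.getElem_append_right (by omega)]
    have h2 : i - L.length < M.length := by simp at h; omega
    refine mono _ _ _ ?_ (hM _ h2)
    rintro a ⟨j, hj, hji, rfl⟩
    refine ⟨L.length + j, by simp; omega, by omega, ?_⟩
    rw [List.getElem_append_right (by omega)]
    simp

theorem GoodList.snoc {α : Type} {S : Set α → α → Prop}
    (mono : ∀ A B x, A ⊆ B → S A x → S B x) {L : List α} {x : α}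
    (hL : GoodList S L) (hx : S {y | y ∈ L} x) : GoodList S (L ++ [x]) := by
  intro i h
  by_cases hi : i < L.length
  · rw [List.getElem_append_left hi]
    refine mono _ _ _ ?_ (hL i hi)
    rintro a ⟨j, hj, hji, rfl⟩
    exact ⟨j, by simp; omega, hji, List.getElem_append_left hj⟩
  · have hi2 : i = L.length := by simp at h; omega
    subst hi2
    have : (L ++ [x])[L.length] = x := by simp
    rw [this]
    refine mono _ _ _ ?_ hx
    intro a ha
    obtain ⟨j, hj, rfl⟩ := List.getElem_of_mem ha
    exact ⟨j, by simp; omega, hj, List.getElem_append_left hj⟩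

/-- Derivability by a good list. -/
def GoodProv {α : Type} (S : Set α → α → Prop) (x : α) : Prop :=
  ∃ L : List α, GoodList S L ∧ L.getLast? = some x

theorem GoodProv.sound {α : Type} {S : Set α → α → Prop} {x : α} (hx : GoodProv S x)
    {Q : α → Prop} (hQ : ∀ A x, (∀ a ∈ A, Q a) → S A x → Q x) : Q x := by
  obtain ⟨L, hL, hl⟩ := hx
  have hm := List.mem_of_getLast? hl
  obtain ⟨i, hi, rfl⟩ := List.getElem_of_mem hm
  exact hL.sound hQ i hi

theorem GoodProv.step0 {α : Type} {S : Set α → α → Prop} {x : α}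
    (mono : ∀ A B x, A ⊆ B → S A x → S B x) (hx : S ∅ x) : GoodProv S x := by
  refine ⟨[] ++ [x], GoodList.snoc mono (fun i h => by simp at h) (mono _ _ _ (by simp) hx), by simp⟩

theorem GoodProv.step2 {α : Type} {S : Set α → α → Prop} {x a b : α}
    (mono : ∀ A B x, A ⊆ B → S A x → S B x) (ha : GoodProv S a) (hb : GoodProv S b)
    (hx : S {a, b} x) : GoodProv S x := by
  obtain ⟨L, hL, hl⟩ := ha
  obtain ⟨M, hM, hm⟩ := hb
  refine ⟨(L ++ M) ++ [x], GoodList.snoc mono (hL.append mono hM) (mono _ _ _ ?_ hx), by simp⟩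
  rintro y (rfl | rfl)
  · simp [List.mem_of_getLast? hl]
  · simp [List.mem_of_getLast? hm]

/-- One step of an RPL proof. -/
def RPLStep (T : Set Fml) (A : Set Fml) (x : Fml) : Prop :=
  IsRPLAxiom x ∨ x ∈ T ∨ ∃ y z, y ∈ A ∧ z ∈ A ∧ z = y.imp x

/-- One step of a GRPL proof. -/
def GRPLStep (T : Set (UQ × Fml)) (A : Set (UQ × Fml)) (x : UQ × Fml) : Prop :=
  IsGRPLAxiom x.1 x.2 ∨ x ∈ T ∨
    (∃ y z, y ∈ A ∧ z ∈ A ∧ z.2 = y.2.imp x.2 ∧ x.1 = UQ.lmul y.1 z.1) ∨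
    (∃ y, ∃ r : UQ, y ∈ A ∧ x = (UQ.limp r y.1, (Fml.const r).imp y.2))

theorem RPLStep.mono (T : Set Fml) (A B : Set Fml) (x : Fml) (h : A ⊆ B)
    (hs : RPLStep T A x) : RPLStep T B x := by
  rcases hs with h1 | h1 | ⟨y, z, hy, hz, e⟩
  · exact Or.inl h1
  · exact Or.inr (Or.inl h1)
  · exact Or.inr (Or.inr ⟨y, z, h hy, h hz, e⟩)

theorem GRPLStep.mono (T : Set (UQ × Fml)) (A B : Set (UQ × Fml)) (x : UQ × Fml) (h : A ⊆ B)
    (hs : GRPLStep T A x) : GRPLStep T B x := by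
  rcases hs with h1 | h1 | ⟨y, z, hy, hz, e⟩ | ⟨y, r, hy, e⟩
  · exact Or.inl h1
  · exact Or.inr (Or.inl h1)
  · exact Or.inr (Or.inr (Or.inl ⟨y, z, h hy, h hz, e⟩))
  · exact Or.inr (Or.inr (Or.inr ⟨y, r, h hy, e⟩))

theorem rplProv_iff (T : Set Fml) (φ : Fml) : RPLProv T φ ↔ GoodProv (RPLStep T) φ := by
  refine exists_congr fun L => and_congr_left fun _ => ?_
  constructor
  · intro H i hi
    rcases H ⟨i, hi⟩ with h | h | ⟨j, k, hj, hk, e⟩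
    · exact Or.inl h
    · exact Or.inr (Or.inl h)
    · exact Or.inr (Or.inr ⟨_, _, ⟨j, j.2, hj, rfl⟩, ⟨k, k.2, hk, rfl⟩, e⟩)
  · rintro H ⟨i, hi⟩
    rcases H i hi with h | h | ⟨_, _, ⟨j, hj, hji, rfl⟩, ⟨k, hk, hki, rfl⟩, e⟩
    · exact Or.inl h
    · exact Or.inr (Or.inl h)
    · exact Or.inr (Or.inr ⟨⟨j, hj⟩, ⟨k, hk⟩, hji, hki, e⟩)

theorem grplProv_iff (T : Set (UQ × Fml)) (p : UQ × Fml) :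
    GRPLProv T p ↔ GoodProv (GRPLStep T) p := by
  refine exists_congr fun L => and_congr_left fun _ => ?_
  constructor
  · intro H i hi
    rcases H ⟨i, hi⟩ with h | h | ⟨j, k, hj, hk, e⟩ | ⟨j, r, hj, e⟩
    · exact Or.inl h
    · exact Or.inr (Or.inl h)
    · exact Or.inr (Or.inr (Or.inl ⟨_, _, ⟨j, j.2, hj, rfl⟩, ⟨k, k.2, hk, rfl⟩, e⟩))
    · exact Or.inr (Or.inr (Or.inr ⟨_, r, ⟨j, j.2, hj, rfl⟩, e⟩))
  · rintro H ⟨i, hi⟩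
    rcases H i hi with h | h | ⟨_, _, ⟨j, hj, hji, rfl⟩, ⟨k, hk, hki, rfl⟩, e⟩ |
      ⟨_, r, ⟨j, hj, hji, rfl⟩, e⟩
    · exact Or.inl h
    · exact Or.inr (Or.inl h)
    · exact Or.inr (Or.inr (Or.inl ⟨⟨j, hj⟩, ⟨k, hk⟩, hji, hki, e⟩))
    · exact Or.inr (Or.inr (Or.inr ⟨⟨j, hj⟩, r, hji, e⟩))

/-- Sets of formulas containing the axioms of Ł and closed under modus ponens. -/
structure LukClosed (P : Fml → Prop) : Prop where
  ax : ∀ φ, IsLukAxiom φ → P φ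
  mp : ∀ φ ψ, P φ → P (φ.imp ψ) → P ψ

namespace LukClosed

variable {P : Fml → Prop}
variable {a b c : Fml}

theorem a1 (H : LukClosed P) (a b : Fml) : P (a.imp (b.imp a)) := H.ax _ (.a1 _ _)

theorem weak (H : LukClosed P) (b : Fml) (h : P a) : P (b.imp a) := H.mp _ _ h (H.a1 _ _)

theorem suff (H : LukClosed P) (c : Fml) (h : P (a.imp b)) : P ((b.imp c).imp (a.imp c)) :=
  H.mp _ _ h (H.ax _ (.a2 _ _ _))

theorem tr (H : LukClosed P) (h : P (a.imp b)) (h2 : P (b.imp c)) : P (a.imp c) :=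
  H.mp _ _ h2 (H.suff _ h)

theorem assertion (H : LukClosed P) (a b : Fml) : P (a.imp ((a.imp b).imp b)) :=
  H.tr (H.a1 a (b.imp a)) (H.ax _ (.a3 _ _))

theorem exch (H : LukClosed P) (h : P (a.imp (b.imp c))) : P (b.imp (a.imp c)) :=
  H.tr (H.assertion b c) (H.suff _ h)

theorem refl (H : LukClosed P) (a : Fml) : P (a.imp a) :=
  H.mp _ _ (H.a1 a a) (H.exch (H.a1 a (a.imp (a.imp a))))

theorem pref (H : LukClosed P) (c : Fml) (h : P (a.imp b)) : P ((c.imp a).imp (c.imp b)) :=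
  H.mp _ _ h (H.exch (H.ax _ (.a2 _ _ _)))

theorem expl (H : LukClosed P) (a b : Fml) : P (a.neg.imp (a.imp b)) :=
  H.tr (H.a1 a.neg b.neg) (H.ax _ (.a4 _ _))

theorem dne (H : LukClosed P) (a : Fml) : P (a.neg.neg.imp a) := by
  have h : P (a.neg.neg.imp ((a.imp a).imp a)) :=
    H.tr (H.expl a.neg (a.imp a).neg) (H.ax _ (.a4 _ _))
  exact H.mp _ _ (H.refl a) (H.exch h)

theorem dni (H : LukClosed P) (a : Fml) : P (a.imp a.neg.neg) :=
  H.mp _ _ (H.dne a.neg) (H.ax _ (.a4 _ _))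

theorem contra (H : LukClosed P) (h : P (a.imp b)) : P (b.neg.imp a.neg) :=
  H.mp _ _ (H.tr (H.dne a) (H.tr h (H.dni b))) (H.ax _ (.a4 _ _))

theorem conj_left (H : LukClosed P) (h : P (a.conj b)) : P a :=
  H.mp _ _ h (H.tr (H.contra (H.expl a (a.imp b).neg)) (H.dne a))

theorem conj_right (H : LukClosed P) (h : P (a.conj b)) : P b :=
  H.mp _ _ (H.conj_left h)
    (H.mp _ _ h (H.tr (H.contra (H.a1 (a.imp b).neg a)) (H.dne _)))

theorem eqv_mp (H : LukClosed P) (h : P (a.eqv b)) : P (a.imp b) := H.conj_left h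

theorem eqv_mpr (H : LukClosed P) (h : P (a.eqv b)) : P (b.imp a) := H.conj_right h

end LukClosed

theorem UQ.lmul_eq (q r : UQ) : q.lmul r = (q.limp r.lneg).lneg := by
  apply Subtype.ext
  obtain ⟨q, hq⟩ := q
  obtain ⟨r, hr⟩ := r
  simp only [UQ.lmul, UQ.lneg, UQ.limp]
  rcases le_total 1 (1 - q + (1 - r)) with h | h
  · rw [min_eq_left h, max_eq_left (by linarith)]; norm_num
  · rw [min_eq_right h, max_eq_right (by linarith)]; ring

theorem UQ.lmul_one : (1 : UQ).lmul 1 = 1 := by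
  apply Subtype.ext
  change max (0 : ℚ) (1 + 1 - 1) = 1
  norm_num

theorem UQ.lneg_zero : (0 : UQ).lneg = 1 := by
  apply Subtype.ext
  change (1 : ℚ) - 0 = 1
  norm_num

theorem rpl_closed (T : Set Fml) : LukClosed (GoodProv (RPLStep T)) where
  ax φ h := .step0 (RPLStep.mono T) (Or.inl (.luk h))
  mp φ ψ h1 h2 := .step2 (RPLStep.mono T) h1 h2
    (Or.inr (Or.inr ⟨φ, φ.imp ψ, by simp, by simp, rfl⟩))

theorem grpl_closed (T : Set (UQ × Fml)) :
    LukClosed (fun φ => GoodProv (GRPLStep T) (1, φ)) where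
  ax φ h := .step0 (GRPLStep.mono T) (Or.inl (.luk h))
  mp φ ψ h1 h2 := .step2 (GRPLStep.mono T) h1 h2
    (Or.inr (Or.inr (Or.inl ⟨(1, φ), (1, φ.imp ψ), by simp, by simp, rfl, UQ.lmul_one.symm⟩)))

theorem grpl_of_rpl (T : Set Fml) (φ : Fml) (h : GoodProv (RPLStep T) φ) :
    GoodProv (GRPLStep ((fun ψ : Fml => ((1 : UQ), ψ)) '' T)) (1, φ) := by
  have H := grpl_closed ((fun ψ : Fml => ((1 : UQ), ψ)) '' T)
  have hax : ∀ x, IsGRPLAxiom 1 x →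
      GoodProv (GRPLStep ((fun ψ : Fml => ((1 : UQ), ψ)) '' T)) (1, x) :=
    fun x hx => .step0 (GRPLStep.mono _) (Or.inl hx)
  refine h.sound (Q := fun φ =>
    GoodProv (GRPLStep ((fun ψ : Fml => ((1 : UQ), ψ)) '' T)) (1, φ)) ?_
  rintro A x hA (hx | hx | ⟨y, z, hy, hz, rfl⟩)
  · cases hx with
    | luk h => exact H.ax _ h
    | book_imp q r => exact hax _ (.book_imp q r)
    | book_neg q => exact hax _ (.book_neg q)
    | book_one => exact hax _ (.const 1)
    | book_zero =>
      have h1 := H.eqv_mpr (hax _ (.book_neg 0))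
      rw [UQ.lneg_zero] at h1
      exact H.mp _ _ (hax _ (.const 1)) h1
  · exact .step0 (GRPLStep.mono _) (Or.inr (Or.inl ⟨x, hx, rfl⟩))
  · exact H.mp _ _ (hA _ hy) (hA _ hz)

theorem rpl_of_grpl (T : Set Fml) (p : UQ × Fml)
    (h : GoodProv (GRPLStep ((fun ψ : Fml => ((1 : UQ), ψ)) '' T)) p) :
    GoodProv (RPLStep T) ((Fml.const p.1).imp p.2) := by
  have H := rpl_closed T
  have hax : ∀ x, IsRPLAxiom x → GoodProv (RPLStep T) x :=
    fun x hx => .step0 (RPLStep.mono _) (Or.inl hx)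
  refine h.sound (Q := fun p => GoodProv (RPLStep T) ((Fml.const p.1).imp p.2)) ?_
  rintro A ⟨s, x⟩ hA (hx | ⟨y, hy, e⟩ | ⟨⟨q, y⟩, ⟨r, z⟩, hy, hz, e1, e2⟩ | ⟨⟨q, y⟩, r, hy, e⟩)
  · simp only at hx ⊢
    cases hx with
    | luk h => exact H.weak _ (H.ax _ h)
    | const q => exact H.refl _
    | book_neg q => exact H.weak _ (hax _ (.book_neg q))
    | book_imp q r => exact H.weak _ (hax _ (.book_imp q r))
    | zero => exact H.mp _ _ (hax _ .book_zero) (H.expl _ _)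
  · cases e
    exact H.weak _ (.step0 (RPLStep.mono _) (Or.inr (Or.inl hy)))
  · simp only at e1 e2 ⊢
    subst e1 e2
    have h1 := hA _ hy
    have h2 := hA _ hz
    simp only at h1 h2
    -- `q → (r → x)`
    have h3 := H.tr h1 (H.exch h2)
    have h4 : GoodProv (RPLStep T) (((Fml.const r).imp x).imp (x.neg.imp (Fml.const r).neg)) :=
      H.tr (H.tr (H.suff _ (H.dne _)) (H.pref _ (H.dni _))) (H.ax _ (.a4 _ _))
    have h5 := H.exch (H.tr h3 h4)
    have h6 := H.tr h5 (H.pref _ (H.eqv_mp (hax _ (.book_neg r))))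
    have h7 := H.tr h6 (H.eqv_mp (hax _ (.book_imp q r.lneg)))
    have h8 := H.eqv_mpr (hax _ (.book_neg (q.limp r.lneg)))
    rw [UQ.lmul_eq]
    exact H.tr h8 (H.tr (H.contra h7) (H.dne _))
  · cases e
    have h1 := hA _ hy
    exact H.tr (H.eqv_mpr (hax _ (.book_imp r q))) (H.pref _ h1)

/-- RPL embeds in GRPL: for every set `T ∪ {φ}` of formulas of the language
of RPL, `T ⊢_RPL φ` iff `{ ⟨1,ψ⟩ : ψ ∈ T } ⊢_GRPL ⟨1,φ⟩`. -/
theorem rpl_embeds_in_grpl (T : Set Fml) (φ : Fml) :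
    RPLProv T φ ↔ GRPLProv ((fun ψ : Fml => ((1 : UQ), ψ)) '' T) (1, φ) := by
  rw [rplProv_iff, grplProv_iff]
  refine ⟨grpl_of_rpl T φ, fun h => ?_⟩
  exact (rpl_closed T).mp _ _ (.step0 (RPLStep.mono T) (Or.inl .book_one)) (rpl_of_grpl T _ h)
end

section
/- Finite strong standard completeness for RPL: if Γ ∪ {φ} is a finite set of formulas of the language of RPL, then Γ ⊢_RPL φ if and only if every assignment into [0,1]_Ł with rational constants interpreted canonically that gives value 1 to all formulas of Γ gives value 1 to φ. -/
/-! ### A linearly ordered group has a real functional positive on any finite set of positives -/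

theorem exists_pos_functional_aux {ι : Type*} [LinearOrder ι] {X : Type*} (P : Finset X)
    (c : ι → X → ℝ) (idx : X → ι)
    (hlow : ∀ x ∈ P, ∀ j < idx x, c j x = 0) (hpos : ∀ x ∈ P, 0 < c (idx x) x) (C : Finset ι) :
    ∃ w : ι → ℝ, ∀ x ∈ P, idx x ∈ C → 0 < ∑ i ∈ C, w i * c i x := by
  classical
  induction C using Finset.induction_on_min with
  | empty => exact ⟨fun _ => 0, fun x _ h => by simp at h⟩
  | insert a s ha ih =>
    obtain ⟨w, hw⟩ := ih
    have has : a ∉ s := fun h => lt_irrefl _ (ha a h)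
    have hev : ∀ᶠ ε in nhdsWithin (0 : ℝ) (Set.Ioi 0), ∀ x ∈ P, idx x = a →
        0 < c a x + ε * ∑ i ∈ s, w i * c i x := by
      rw [Filter.eventually_all_finset]
      intro x hx
      by_cases h : idx x = a
      · have hc : Filter.Tendsto (fun ε : ℝ => c a x + ε * ∑ i ∈ s, w i * c i x)
            (nhdsWithin 0 (Set.Ioi 0)) (nhds (c a x + 0 * ∑ i ∈ s, w i * c i x)) := by
          apply Filter.Tendsto.mono_left _ nhdsWithin_le_nhds
          apply Continuous.tendsto
          fun_prop
        have h0 : 0 < c a x + 0 * ∑ i ∈ s, w i * c i x := by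
          have := hpos x hx
          rw [h] at this
          simpa using this
        filter_upwards [hc.eventually_const_lt h0] with ε hε _
        exact hε
      · exact Filter.Eventually.of_forall fun ε h' => absurd h' h
    obtain ⟨ε, hε, hε0⟩ := (hev.and self_mem_nhdsWithin).exists
    have hε0 : 0 < ε := hε0
    refine ⟨fun i => if i = a then 1 else ε * w i, fun x hx hxa => ?_⟩
    have key : ∑ i ∈ insert a s, (if i = a then 1 else ε * w i) * c i x =
        c a x + ε * ∑ i ∈ s, w i * c i x := by
      rw [Finset.sum_insert has, Finset.mul_sum]
      congr 1
      · simp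
      · apply Finset.sum_congr rfl
        intro i hi
        have : i ≠ a := fun h => has (h ▸ hi)
        simp [this, mul_assoc]
    rw [key]
    rcases Finset.mem_insert.1 hxa with h | h
    · exact hε x hx h
    · rw [hlow x hx a (ha _ h), zero_add]
      exact mul_pos hε0 (hw x hx h)

theorem exists_pos_functional {G : Type*} [AddCommGroup G] [LinearOrder G]
    [IsOrderedAddMonoid G] (P : Finset G) (hP : ∀ p ∈ P, 0 < p) :
    ∃ h : G →+ ℝ, ∀ p ∈ P, 0 < h p := by
  classical
  by_cases hne : P.Nonempty
  swap
  · exact ⟨0, fun p hp => absurd ⟨p, hp⟩ hne⟩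
  obtain ⟨f, hf, -⟩ := hahnEmbedding_isOrderedAddMonoid G
  have hmono : StrictMono f := f.monotone'.strictMono_of_injective hf
  have hex : ∀ p ∈ P, ∃ i, (∀ j < i, (ofLex (f p)).coeff j = 0) ∧ 0 < (ofLex (f p)).coeff i := by
    intro p hp
    have h1 : f 0 < f p := hmono (hP p hp)
    rw [map_zero, HahnSeries.lt_iff] at h1
    obtain ⟨i, h2, h3⟩ := h1
    exact ⟨i, fun j hj => (h2 j hj).symm, h3⟩
  obtain ⟨p0, hp0⟩ := hne
  have hex' : ∀ p : G, ∃ i, p ∈ P →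
      (∀ j < i, (ofLex (f p)).coeff j = 0) ∧ 0 < (ofLex (f p)).coeff i := by
    intro p
    by_cases hp : p ∈ P
    · obtain ⟨i, hi⟩ := hex p hp
      exact ⟨i, fun _ => hi⟩
    · obtain ⟨i, hi⟩ := hex p0 hp0
      exact ⟨i, fun h => absurd h hp⟩
  choose idx hidx using hex'
  obtain ⟨w, hw⟩ := exists_pos_functional_aux P (fun i p => (ofLex (f p)).coeff i) idx
    (fun x hx => (hidx x hx).1) (fun x hx => (hidx x hx).2) (P.image idx)
  refine ⟨{ toFun := fun p => ∑ i ∈ P.image idx, w i * (ofLex (f p)).coeff i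
            map_zero' := by simp
            map_add' := fun a b => by simp [mul_add, Finset.sum_add_distrib] }, fun p hp => ?_⟩
  exact hw p hp (Finset.mem_image_of_mem _ hp)

/-! ### Wajsberg algebras -/

/-- Wajsberg algebras (term-equivalent to MV-algebras). -/
class Waj (A : Type) where
  imp : A → A → A
  neg : A → A
  one : A
  w1 : ∀ x, imp one x = x
  a1 : ∀ x y, imp x (imp y x) = one
  a2 : ∀ x y z, imp (imp x y) (imp (imp y z) (imp x z)) = one
  w3 : ∀ x y, imp (imp x y) y = imp (imp y x) x
  a4 : ∀ x y, imp (imp (neg x) (neg y)) (imp y x) = one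

namespace Waj

variable {A : Type} [Waj A]

/-- The order, as a plain predicate. -/
def L (x y : A) : Prop := imp x y = one

theorem antisymm {x y : A} (h1 : L x y) (h2 : L y x) : x = y := by
  have := w3 x y
  unfold L at h1 h2
  rw [h1, h2, w1, w1] at this
  exact this.symm

theorem refl (x : A) : L x x := by
  have := a2 (one : A) one x
  rw [w1, w1, w1] at this
  exact this

theorem le_one (x : A) : L x one := by
  have h := a1 x (one : A)
  have h3 := w3 x (one : A)
  rw [w1, refl x] at h3
  have h2 := a2 (one : A) x one
  rw [w1, w1, h3] at h2
  exact h2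

theorem one_le {x : A} (h : L one x) : x = one := antisymm (le_one x) h

theorem trans {x y z : A} (h1 : L x y) (h2 : L y z) : L x z := by
  have := a2 x y z
  unfold L at *
  rw [h1, h2, w1, w1] at this
  exact this

theorem imp_anti {x y : A} (z : A) (h : L x y) : L (imp y z) (imp x z) := by
  have := a2 x y z
  unfold L at *
  rw [h, w1] at this
  exact this

theorem le_imp (x y : A) : L x (imp y x) := a1 x y

theorem le_imp_imp (x y : A) : L x (imp (imp x y) y) := by
  rw [w3]; exact le_imp _ _

theorem exch_le (x y z : A) : L (imp x (imp y z)) (imp y (imp x z)) :=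
  trans (a2 x (imp y z) z) (imp_anti _ (le_imp_imp y z))

theorem exch (x y z : A) : imp x (imp y z) = imp y (imp x z) :=
  antisymm (exch_le _ _ _) (exch_le _ _ _)

theorem imp_mono {x y : A} (z : A) (h : L x y) : L (imp z x) (imp z y) := by
  have := a2 z x y
  rw [exch] at this
  unfold L at *
  rw [h, w1] at this
  exact this

theorem nn_le (x : A) : L (neg (neg x)) x := by
  have h1 : L (neg (neg x)) (imp (neg (neg one)) (neg (neg x))) := le_imp _ _
  have h2 := trans h1 (a4 (neg one) (neg x))
  have h3 := trans h2 (a4 x one)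
  rwa [w1] at h3

theorem nn (x : A) : neg (neg x) = x := by
  apply antisymm (nn_le x)
  have h1 := nn_le (neg x)
  have := a4 (neg (neg x)) x
  unfold L at *
  rw [h1, w1] at this
  exact this

theorem contra (x y : A) : imp (neg x) (neg y) = imp y x := by
  apply antisymm (a4 x y)
  have := a4 (neg y) (neg x)
  rw [nn, nn] at this
  exact this

theorem contra' (x y : A) : imp (neg x) y = imp (neg y) x := by
  rw [← contra, nn]

theorem contra'' (x y : A) : imp x (neg y) = imp y (neg x) := by
  rw [← contra, nn]

theorem imp_neg_one (x : A) : imp x (neg one) = neg x := by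
  rw [contra'', w1]

theorem zero_le (x : A) : L (neg one) x := by
  unfold L
  rw [contra']; exact le_one _

theorem le_zero {x : A} (h : L x (neg one)) : x = neg one := antisymm h (zero_le x)

/-- Strong conjunction. -/
def mul (x y : A) : A := neg (imp x (neg y))

/-- Strong disjunction. -/
def add (x y : A) : A := imp (neg x) y

theorem mul_imp (x y z : A) : imp (mul x y) z = imp x (imp y z) := by
  unfold mul
  rw [contra', exch, contra]

theorem mul_comm (x y : A) : mul x y = mul y x := by
  unfold mul; rw [contra'']

theorem add_comm (x y : A) : add x y = add y x := contra' x y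

theorem ext_imp {x y : A} (h : ∀ z, imp x z = imp y z) : x = y := by
  apply antisymm
  · unfold L; rw [h]; exact refl _
  · unfold L; rw [← h]; exact refl _

theorem mul_assoc (x y z : A) : mul (mul x y) z = mul x (mul y z) := by
  apply ext_imp; intro w
  rw [mul_imp, mul_imp, mul_imp, mul_imp]

theorem neg_mul (x y : A) : neg (mul x y) = add (neg x) (neg y) := by
  unfold mul add; rw [nn, nn]

theorem neg_add (x y : A) : neg (add x y) = mul (neg x) (neg y) := by
  unfold mul add; rw [nn]

theorem add_assoc (x y z : A) : add (add x y) z = add x (add y z) := by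
  rw [← nn (add (add x y) z), neg_add, neg_add, mul_assoc, ← neg_add, ← neg_add, nn]

theorem mul_le_iff {x y z : A} : L (mul x y) z ↔ L x (imp y z) := by
  unfold L; rw [mul_imp]

theorem mul_le_left (x y : A) : L (mul x y) x := by
  rw [mul_le_iff]; exact le_imp _ _

theorem mul_le_right (x y : A) : L (mul x y) y := by
  rw [mul_comm]; exact mul_le_left _ _

theorem mul_mono {x y x' y' : A} (h : L x x') (h' : L y y') : L (mul x y) (mul x' y') := by
  have e1 : L (mul x y) (mul x' y) := by
    rw [mul_le_iff]; apply trans h; rw [← mul_le_iff]; exact refl _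
  have e2 : L (mul x' y) (mul x' y') := by
    rw [mul_comm, mul_comm x']
    rw [mul_le_iff]; apply trans h'; rw [← mul_le_iff]; exact refl _
  exact trans e1 e2

theorem neg_anti {x y : A} (h : L x y) : L (neg y) (neg x) := by
  unfold L; rw [contra]; exact h

theorem add_mono {x y x' y' : A} (h : L x x') (h' : L y y') : L (add x y) (add x' y') :=
  trans (imp_anti _ (neg_anti h)) (imp_mono _ h')

theorem le_add_right (x y : A) : L y (add x y) := le_imp _ _

theorem le_add_left (x y : A) : L x (add x y) := by rw [add_comm]; exact le_imp _ _

theorem mul_one (x : A) : mul x one = x := by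
  unfold mul; rw [imp_neg_one, nn]

theorem div_symm (x y : A) : mul x (imp x y) = mul y (imp y x) := by
  unfold mul
  rw [contra'', ← contra y x, w3, contra, contra'']

theorem div {x y : A} (h : L y x) : mul x (imp x y) = y := by
  rw [div_symm, show imp y x = one from h, mul_one]

theorem mp_le (x y : A) : L (mul x (imp x y)) y := by
  rw [mul_comm, mul_le_iff]; exact refl _

/-- Join. -/
def sup (x y : A) : A := imp (imp x y) y

theorem le_sup_left (x y : A) : L x (sup x y) := le_imp_imp x y
theorem le_sup_right (x y : A) : L y (sup x y) := le_imp _ _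
theorem sup_comm (x y : A) : sup x y = sup y x := w3 x y

theorem sup_le {x y z : A} (h1 : L x z) (h2 : L y z) : L (sup x y) z := by
  have h3 : sup z y = z := by
    rw [sup_comm]; unfold sup; rw [show imp y z = one from h2, w1]
  rw [← h3]
  exact imp_anti _ (imp_anti _ h1)

theorem prelin (x y : A) : sup (imp x y) (imp y x) = one := by
  have key : mul (mul x (neg y)) (imp (mul x (neg y)) (mul y (neg x))) = neg one := by
    apply le_zero
    generalize hb : mul y (neg x) = b
    rw [mul_imp, exch, mul_assoc, div_symm (neg y), ← mul_assoc, div_symm x b]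
    have h1 : L (mul b (imp b x)) (mul (neg x) y) := by
      apply trans (mul_le_left _ _)
      rw [← hb, mul_comm]; exact refl _
    apply trans (mul_mono h1 (refl _))
    rw [mul_assoc, contra'']
    have h2 : L (mul y (imp y (neg (imp x b)))) x := by
      apply trans (mp_le _ _)
      rw [← nn x]
      apply neg_anti
      rw [nn, ← contra]
      exact le_imp _ _
    apply trans (mul_mono (refl _) h2)
    unfold mul
    rw [show imp (neg x) (neg x) = one from refl _]
    exact refl _
  have e1 : mul x (neg y) = neg (imp x y) := by unfold mul; rw [nn]
  have e2 : mul y (neg x) = neg (imp y x) := by unfold mul; rw [nn]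
  rw [e1, e2, contra] at key
  unfold mul at key
  rw [contra] at key
  have := congrArg neg key
  rw [nn, nn] at this
  rw [sup_comm]
  exact this

theorem sup_mp (c x y : A) (h1 : sup c x = one) (h2 : sup c (imp x y) = one) :
    sup c y = one := by
  have h3 : L (sup c x) (imp (sup c (imp x y)) (sup c y)) := by
    apply sup_le
    · exact trans (le_sup_left c y) (le_imp _ _)
    · show L x _
      unfold L
      rw [exch]
      apply sup_le
      · exact trans (le_sup_left c y) (le_imp _ _)
      · exact imp_mono _ (le_sup_right c y)
  rw [h1, h2, w1] at h3
  exact one_le h3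

theorem sup_self (x : A) : sup x x = x := by
  unfold sup; rw [show imp x x = one from refl _, w1]

/-- Associativity identity, mixed case. -/
theorem mix {a b c : A} (hab : L a b) (hbc : L b c) :
    mul c (imp b a) = imp (imp c b) a := by
  apply antisymm
  · rw [mul_comm, mul_le_iff, exch]
    have : L (mul (mul (imp c b) c) (imp b a)) a := by
      rw [mul_comm (imp c b), div hbc]; exact mp_le _ _
    rw [mul_assoc, mul_le_iff, mul_comm, mul_imp] at this
    unfold L at *
    rw [exch] at this
    rw [exch]
    rw [exch (imp c b)]
    exact this
  · have hx : L (imp (imp c b) a) c := by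
      apply trans (imp_mono _ hab)
      apply sup_le (refl _) hbc
    have h2 : mul c (imp c (imp (imp c b) a)) = imp (imp c b) a := div hx
    rw [← mul_imp, div hbc] at h2
    rw [h2]; exact refl _

/-- Associativity identity, low case. -/
theorem low {a b c : A} (ha : L a b) (hc : L c b) : mul c (imp b a) = mul a (imp b c) := by
  have h1 := div ha
  have h2 := div hc
  calc mul c (imp b a) = mul (mul b (imp b c)) (imp b a) := by rw [h2]
    _ = mul (mul b (imp b a)) (imp b c) := by
        rw [mul_assoc, mul_comm (imp b c), ← mul_assoc]
    _ = mul a (imp b c) := by rw [h1]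

end Waj

/-! ### Chang's group of a Wajsberg chain -/

/-- Nontrivial totally ordered Wajsberg algebras. -/
class WajChain (A : Type) extends Waj A where
  total : ∀ x y : A, Waj.L x y ∨ Waj.L y x
  nontriv : (Waj.one : A) ≠ Waj.neg Waj.one

namespace Waj

variable {A : Type} [WajChain A]

noncomputable instance chainOrder : LinearOrder A where
  le := L
  le_refl := refl
  le_trans := fun _ _ _ => trans
  le_antisymm := fun _ _ => antisymm
  le_total := WajChain.total
  toDecidableLE := Classical.decRel _

theorem le_def (x y : A) : x ≤ y ↔ L x y := Iff.rfl

/-- Carry: the sum of `a` and `b` is at least one. -/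
def carry (a b : A) : Prop := add a b = one

theorem carry_comm (a b : A) : carry a b ↔ carry b a := by
  unfold carry; rw [add_comm]

theorem carry_iff (a b : A) : carry a b ↔ L (neg a) b := Iff.rfl

theorem not_carry {a b : A} (h : ¬ carry a b) : L b (neg a) :=
  (WajChain.total (neg a) b).resolve_left h

theorem assoc_low {a b c : A} (hab : ¬ carry a b) (hbc : ¬ carry b c) :
    mul (add a b) c = mul a (add b c) := by
  rw [carry_comm] at hab
  have := low (not_carry hab) (not_carry hbc)
  rw [mul_comm, add_comm]
  exact this

theorem assoc_mid {a b c : A} (hab : ¬ carry a b) (hbc : carry b c) :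
    mul (add a b) c = add a (mul b c) := by
  rw [carry_comm] at hab
  have := mix (not_carry hab) hbc
  rw [mul_comm, add_comm a b, add_comm a]
  unfold add mul
  unfold mul at this
  rw [nn, contra'' b c]
  exact this

theorem assoc_high {a b c : A} (hab : carry a b) (hbc : carry b c) :
    add (mul a b) c = add a (mul b c) := by
  have h1 : L (neg a) (neg (neg b)) := by rw [nn]; exact hab
  have h2 : L (neg c) (neg (neg b)) := by
    rw [nn]; rw [carry_comm] at hbc; exact hbc
  have := low h1 h2
  have e : neg (add (mul a b) c) = neg (add a (mul b c)) := by
    rw [neg_add, neg_add, neg_mul, neg_mul, mul_comm _ (neg c), add_comm (neg a)]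
    exact this
  have e2 := congrArg neg e
  rwa [nn, nn] at e2

/-- Chang's group of a chain: pairs of an integer part and a fractional part. -/
@[ext] structure ChG (A : Type) [WajChain A] where
  z : ℤ
  f : A
  hf : f ≠ one

namespace ChG

theorem mul_ne {a b : A} (ha : a ≠ one) : mul a b ≠ one := by
  intro h
  apply ha
  apply one_le
  rw [← h]; exact mul_le_left _ _

theorem zero_ne : (neg one : A) ≠ one := fun h => WajChain.nontriv h.symm

open Classical in
noncomputable instance : Add (ChG A) where
  add p q := if h : carry p.f q.f then ⟨p.z + q.z + 1, mul p.f q.f, mul_ne p.hf⟩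
    else ⟨p.z + q.z, Waj.add p.f q.f, h⟩

noncomputable instance : Zero (ChG A) := ⟨⟨0, neg one, zero_ne⟩⟩

open Classical in
noncomputable instance : Neg (ChG A) where
  neg p := if h : p.f = neg one then ⟨-p.z, neg one, zero_ne⟩
    else ⟨-p.z - 1, Waj.neg p.f, fun h' => h (by rw [← h', nn])⟩

theorem add_carry {p q : ChG A} (h : carry p.f q.f) :
    p + q = ⟨p.z + q.z + 1, mul p.f q.f, mul_ne p.hf⟩ := dif_pos h

theorem add_nocarry {p q : ChG A} (h : ¬ carry p.f q.f) :
    p + q = ⟨p.z + q.z, Waj.add p.f q.f, h⟩ := dif_neg h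

theorem zero_z : (0 : ChG A).z = 0 := rfl
theorem zero_f : (0 : ChG A).f = neg one := rfl

protected theorem add_comm (p q : ChG A) : p + q = q + p := by
  by_cases h : carry p.f q.f
  · have h' := (carry_comm _ _).1 h
    rw [add_carry h, add_carry h']
    ext
    · simp only; ring
    · exact mul_comm _ _
  · have h' := fun h' => h ((carry_comm _ _).1 h')
    rw [add_nocarry h, add_nocarry h']
    ext
    · simp only; ring
    · exact Waj.add_comm _ _

theorem assoc_aux {p q r : ChG A} (h1 : ¬ carry p.f q.f) (h2 : carry q.f r.f) :
    p + q + r = p + (q + r) := by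
  rw [add_nocarry h1, add_carry h2]
  have h3 : carry (Waj.add p.f q.f) r.f := by
    unfold carry at h2 ⊢
    rw [Waj.add_assoc, h2]
    exact le_one _
  have h4 : ¬ carry p.f (mul q.f r.f) := by
    unfold carry
    rw [← assoc_mid h1 h2, mul_comm]
    exact mul_ne r.hf
  rw [add_carry (by exact h3), add_nocarry (by exact h4)]
  ext
  · simp only; ring
  · exact assoc_mid h1 h2

protected theorem add_assoc (p q r : ChG A) : p + q + r = p + (q + r) := by
  by_cases h1 : carry p.f q.f <;> by_cases h2 : carry q.f r.f
  · rw [add_carry h1, add_carry h2]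
    have h := assoc_high h1 h2
    by_cases h3 : carry (mul p.f q.f) r.f
    · have h4 : carry p.f (mul q.f r.f) := by
        unfold carry at h3 ⊢; rw [← h]; exact h3
      rw [add_carry (by exact h3), add_carry (by exact h4)]
      ext
      · simp only; ring
      · exact mul_assoc _ _ _
    · have h4 : ¬ carry p.f (mul q.f r.f) := by
        unfold carry at h3 ⊢; rw [← h]; exact h3
      rw [add_nocarry (by exact h3), add_nocarry (by exact h4)]
      ext
      · simp only; ring
      · exact h
  · rw [carry_comm] at h1 h2
    have := assoc_aux h2 h1
    rw [ChG.add_comm p q, ChG.add_comm _ r, ← this, ChG.add_comm r q, ChG.add_comm p]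
  · exact assoc_aux h1 h2
  · rw [add_nocarry h1, add_nocarry h2]
    by_cases h3 : carry (Waj.add p.f q.f) r.f
    · have h4 : carry p.f (Waj.add q.f r.f) := by
        unfold carry at h3 ⊢; rw [← Waj.add_assoc]; exact h3
      rw [add_carry (by exact h3), add_carry (by exact h4)]
      ext
      · simp only; ring
      · exact assoc_low h1 h2
    · have h4 : ¬ carry p.f (Waj.add q.f r.f) := by
        unfold carry at h3 ⊢; rw [← Waj.add_assoc]; exact h3
      rw [add_nocarry (by exact h3), add_nocarry (by exact h4)]
      ext
      · simp only; ring
      · exact Waj.add_assoc _ _ _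

theorem zero_add' (p : ChG A) : 0 + p = p := by
  have e : Waj.add (neg one) p.f = p.f := by
    unfold Waj.add; rw [nn, w1]
  have h : ¬ carry (0 : ChG A).f p.f := by
    unfold carry
    rw [zero_f, e]; exact p.hf
  rw [add_nocarry h]
  ext
  · simp [zero_z]
  · exact e

theorem neg_add' (p : ChG A) : -p + p = 0 := by
  by_cases h : p.f = neg one
  · have e : -p = ⟨-p.z, neg one, zero_ne⟩ := dif_pos h
    have e2 : Waj.add (neg one) p.f = neg one := by
      unfold Waj.add; rw [nn, w1, h]
    have h2 : ¬ carry (neg one) p.f := by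
      unfold carry; rw [e2]; exact zero_ne
    rw [e, add_nocarry (by exact h2)]
    ext
    · simp [zero_z]
    · exact e2
  · have e : -p = ⟨-p.z - 1, Waj.neg p.f, fun h' => h (by rw [← h', nn])⟩ := dif_neg h
    have h2 : carry (neg p.f) p.f := by
      rw [carry_iff, nn]; exact refl _
    rw [e, add_carry (by exact h2)]
    ext
    · show -p.z - 1 + p.z + 1 = 0
      ring
    · show mul (neg p.f) p.f = neg one
      unfold mul
      rw [show imp (neg p.f) (neg p.f) = one from refl _]

noncomputable instance : AddCommGroup (ChG A) where
  add_assoc := ChG.add_assoc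
  add_comm := ChG.add_comm
  zero_add := zero_add'
  add_zero := fun p => by rw [ChG.add_comm]; exact zero_add' p
  neg_add_cancel := neg_add'
  nsmul := nsmulRec
  zsmul := zsmulRec

noncomputable instance : LinearOrder (ChG A) :=
  LinearOrder.lift' (fun p : ChG A => (toLex (p.z, p.f) : ℤ ×ₗ A)) (by
    intro p q h
    have h' := toLex.injective h
    simp only [Prod.mk.injEq] at h'
    exact ChG.ext h'.1 h'.2)

theorem le_iff (p q : ChG A) : p ≤ q ↔ p.z < q.z ∨ p.z = q.z ∧ L p.f q.f := by
  have : p ≤ q ↔ (toLex (p.z, p.f) : ℤ ×ₗ A) ≤ toLex (q.z, q.f) := Iff.rfl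
  rw [this, Prod.Lex.toLex_le_toLex]
  rfl

instance : IsOrderedAddMonoid (ChG A) where
  add_le_add_left := by
    intro p q h r
    rw [le_iff] at h
    by_cases h1 : carry p.f r.f <;> by_cases h2 : carry q.f r.f
    · rw [add_carry h1, add_carry h2, le_iff]
      rcases h with h | ⟨h, h'⟩
      · left; simp only; omega
      · right; exact ⟨by simp only; omega, mul_mono h' (refl _)⟩
    · rw [add_carry h1, add_nocarry h2, le_iff]
      rcases h with h | ⟨h, h'⟩
      · by_cases h3 : p.z + 1 = q.z
        · right; refine ⟨by simp only; omega, ?_⟩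
          exact trans (mul_le_right _ _) (le_add_right _ _)
        · left; simp only; omega
      · exfalso; apply h2
        apply one_le
        rw [← show add p.f r.f = one from h1]
        exact add_mono h' (refl _)
    · rw [add_nocarry h1, add_carry h2, le_iff]
      left; simp only; rcases h with h | ⟨h, h'⟩ <;> omega
    · rw [add_nocarry h1, add_nocarry h2, le_iff]
      rcases h with h | ⟨h, h'⟩
      · left; simp only; omega
      · right; exact ⟨by simp only; omega, add_mono h' (refl _)⟩

/-- The strong unit. -/
noncomputable def u : ChG A := ⟨1, neg one, zero_ne⟩

open Classical in
/-- The embedding of the chain. -/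
noncomputable def emb (a : A) : ChG A := if h : a = one then u else ⟨0, a, h⟩

theorem emb_one : emb (one : A) = u := dif_pos rfl

theorem emb_ne {a : A} (h : a ≠ one) : emb a = ⟨0, a, h⟩ := dif_neg h

theorem emb_zero : emb (neg one : A) = 0 := emb_ne zero_ne

theorem emb_mono {a b : A} (h : L a b) : emb a ≤ emb b := by
  by_cases ha : a = one
  · have : b = one := by apply one_le; rw [← ha]; exact h
    rw [ha, this]
  · by_cases hb : b = one
    · rw [emb_ne ha, hb, emb_one, le_iff]
      left; show (0 : ℤ) < 1; norm_num
    · rw [emb_ne ha, emb_ne hb, le_iff]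
      right; exact ⟨rfl, h⟩

theorem emb_inj {a b : A} (h : emb a = emb b) : a = b := by
  by_cases ha : a = one <;> by_cases hb : b = one
  · rw [ha, hb]
  · rw [ha, emb_one, emb_ne hb] at h
    have := congrArg ChG.z h
    simp [u] at this
  · rw [hb, emb_one, emb_ne ha] at h
    have := congrArg ChG.z h
    simp [u] at this
  · rw [emb_ne ha, emb_ne hb] at h
    exact congrArg ChG.f h

theorem emb_imp_of_le {a b : A} (h : L b a) : emb (imp a b) + emb a = u + emb b := by
  by_cases ha : a = one
  · rw [ha, w1, emb_one, _root_.add_comm]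
  · by_cases hd : imp a b = one
    · have : a = b := antisymm hd h
      rw [hd, emb_one, this]
    · have hb : b ≠ one := fun hb => ha (one_le (hb ▸ h))
      have hc : carry (imp a b) a := by
        rw [carry_comm]
        have : L (neg a) (imp a b) := by
          rw [← imp_neg_one]; exact imp_mono _ (zero_le _)
        exact this
      have hu : ¬ carry (u : ChG A).f b := by
        have : Waj.add (u : ChG A).f b = b := by
          show imp (neg (neg one)) b = b
          rw [nn, w1]
        unfold carry; rw [this]; exact hb
      rw [emb_ne ha, emb_ne hd, emb_ne hb, add_carry (by exact hc), add_nocarry (by exact hu)]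
      ext
      · simp [u]
      · show mul (imp a b) a = imp (neg (neg one)) b
        rw [nn, w1, mul_comm, div h]

theorem emb_neg (a : A) : emb (neg a) = u - emb a := by
  have := emb_imp_of_le (zero_le a)
  rw [imp_neg_one, emb_zero, add_zero] at this
  rw [← this]; abel

end ChG

end Waj

/-! ### Provability -/

/-- Inductive version of provability from a theory. -/
inductive Prov (T : Set Fml) : Fml → Prop
  | ax {φ : Fml} : IsRPLAxiom φ → Prov T φ
  | hyp {φ : Fml} : φ ∈ T → Prov T φ
  | mp {φ ψ : Fml} : Prov T φ → Prov T (φ.imp ψ) → Prov T ψ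

theorem isRPLProofFrom_snoc {T : Set Fml} {L : List Fml} {x : Fml} (hL : IsRPLProofFrom T L)
    (hx : IsRPLAxiom x ∨ x ∈ T ∨ ∃ a, a ∈ L ∧ a.imp x ∈ L) : IsRPLProofFrom T (L ++ [x]) := by
  rintro ⟨i, hi⟩
  by_cases h : i < L.length
  · have := hL ⟨i, h⟩
    have e : (L ++ [x]).get ⟨i, hi⟩ = L.get ⟨i, h⟩ := by
      simp [List.getElem_append_left h]
    rw [e]
    rcases this with h1 | h1 | ⟨⟨j, hj⟩, ⟨k, hk⟩, hji, hki, h1⟩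
    · exact Or.inl h1
    · exact Or.inr (Or.inl h1)
    · refine Or.inr (Or.inr ⟨⟨j, by simp; omega⟩, ⟨k, by simp; omega⟩, hji, hki, ?_⟩)
      simpa [List.getElem_append_left hj, List.getElem_append_left hk] using h1
  · have hi' : i = L.length := by
      simp at hi; omega
    subst hi'
    have e : (L ++ [x]).get ⟨L.length, hi⟩ = x := by simp
    rw [e]
    rcases hx with h1 | h1 | ⟨a, ha, hax⟩
    · exact Or.inl h1
    · exact Or.inr (Or.inl h1)
    · obtain ⟨j, hj, rfl⟩ := List.getElem_of_mem ha
      obtain ⟨k, hk, hk'⟩ := List.getElem_of_mem hax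
      refine Or.inr (Or.inr ⟨⟨j, by simp; omega⟩, ⟨k, by simp; omega⟩, hj, hk, ?_⟩)
      simpa [List.getElem_append_left hj, List.getElem_append_left hk] using hk'

theorem Prov.list {T : Set Fml} {φ : Fml} (h : Prov T φ) :
    ∀ L0, IsRPLProofFrom T L0 → ∃ L, IsRPLProofFrom T (L0 ++ L ++ [φ]) := by
  induction h with
  | ax h => exact fun L0 h0 => ⟨[], isRPLProofFrom_snoc (by simpa using h0) (Or.inl h)⟩
  | hyp h => exact fun L0 h0 => ⟨[], isRPLProofFrom_snoc (by simpa using h0) (Or.inr (Or.inl h))⟩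
  | @mp a b _ _ ih1 ih2 =>
    intro L0 h0
    obtain ⟨L1, h1⟩ := ih1 L0 h0
    obtain ⟨L2, h2⟩ := ih2 _ h1
    refine ⟨L1 ++ [a] ++ L2 ++ [a.imp b], ?_⟩
    have := isRPLProofFrom_snoc (x := b) h2 (Or.inr (Or.inr ⟨a, by simp, by simp⟩))
    simpa using this

theorem Prov.toRPL {T : Set Fml} {φ : Fml} (h : Prov T φ) : RPLProv T φ := by
  obtain ⟨L, hL⟩ := h.list [] (fun i => absurd i.2 (by simp))
  exact ⟨_, hL, by simp⟩

theorem eval_mem {v : ℕ → ℝ} (hv : IsAssignment v) (φ : Fml) : 0 ≤ eval v φ ∧ eval v φ ≤ 1 := by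
  induction φ with
  | var n => exact hv n
  | const q =>
    have := q.2
    simp only [eval]
    exact ⟨by exact_mod_cast this.1, by exact_mod_cast this.2⟩
  | neg a ih => simp only [eval]; constructor <;> linarith
  | imp a b iha ihb =>
    simp only [eval]
    exact ⟨le_min (by norm_num) (by linarith), min_le_left _ _⟩

theorem eval_eqv {v : ℕ → ℝ} {a b : Fml} (h : eval v a = eval v b) :
    eval v (a.eqv b) = 1 := by
  simp [Fml.eqv, Fml.conj, Fml.odot, eval, h]

theorem ax_sound {v : ℕ → ℝ} (hv : IsAssignment v) {φ : Fml} (h : IsRPLAxiom φ) :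
    eval v φ = 1 := by
  cases h with
  | luk h =>
    cases h with
    | a1 a b =>
      have h1 := eval_mem hv a; have h2 := eval_mem hv b
      simp only [eval]; grind
    | a2 a b c =>
      have h1 := eval_mem hv a; have h2 := eval_mem hv b; have h3 := eval_mem hv c
      simp only [eval]; grind
    | a3 a b =>
      have h1 := eval_mem hv a; have h2 := eval_mem hv b
      simp only [eval]; grind
    | a4 a b =>
      have h1 := eval_mem hv a; have h2 := eval_mem hv b
      simp only [eval]; grind
  | book_imp q r => apply eval_eqv; simp [eval, UQ.limp]
  | book_neg q => apply eval_eqv; simp [eval, UQ.lneg]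
  | book_one => simp only [eval]; exact_mod_cast rfl
  | book_zero =>
    simp only [eval]
    have : ((0 : UQ) : ℚ) = 0 := rfl
    rw [this]; simp

theorem rpl_sound {T : Set Fml} {φ : Fml} (h : RPLProv T φ) {v : ℕ → ℝ} (hv : IsAssignment v)
    (hT : ∀ ψ ∈ T, eval v ψ = 1) : eval v φ = 1 := by
  obtain ⟨L, hL, hlast⟩ := h
  have key : ∀ n (hn : n < L.length), eval v (L.get ⟨n, hn⟩) = 1 := by
    intro n
    induction n using Nat.strong_induction_on with
    | _ n ih =>
      intro hn
      rcases hL ⟨n, hn⟩ with h1 | h1 | ⟨j, k, hj, hk, h1⟩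
      · exact ax_sound hv h1
      · exact hT _ h1
      · have e1 := ih j hj j.2
        have e2 := ih k hk k.2
        have e3 : eval v (L.get k) = 1 := e2
        rw [h1] at e3
        have e4 : eval v (L.get j) = 1 := e1
        simp only [eval, e4] at e3
        have := eval_mem hv (L.get ⟨n, hn⟩)
        have h5 : (1:ℝ) ≤ 1 - 1 + eval v (L.get ⟨n, hn⟩) := by
          rw [← min_eq_left_iff]; exact e3
        linarith [this.2]
  have hmem : φ ∈ L := List.mem_of_getLast? hlast
  obtain ⟨n, hn, rfl⟩ := List.getElem_of_mem hmem
  exact key n hn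

/-! ### The Lindenbaum algebra -/

namespace Prov

variable {T : Set Fml}

theorem a1 (a b : Fml) : Prov T (a.imp (b.imp a)) := .ax (.luk (.a1 a b))
theorem a2 (a b c : Fml) : Prov T ((a.imp b).imp ((b.imp c).imp (a.imp c))) :=
  .ax (.luk (.a2 a b c))
theorem a3 (a b : Fml) : Prov T (((a.imp b).imp b).imp ((b.imp a).imp a)) :=
  .ax (.luk (.a3 a b))
theorem a4 (a b : Fml) : Prov T ((a.neg.imp b.neg).imp (b.imp a)) :=
  .ax (.luk (.a4 a b))

theorem trans {a b c : Fml} (h1 : Prov T (a.imp b)) (h2 : Prov T (b.imp c)) :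
    Prov T (a.imp c) := .mp h2 (.mp h1 (a2 a b c))

theorem top_imp {t : Fml} (ht : Prov T t) (a : Fml) : Prov T ((t.imp a).imp a) :=
  .mp (.mp ht (a1 t (a.imp t))) (a3 a t)

theorem one : Prov T (Fml.const 1) := .ax .book_one

theorem refl (a : Fml) : Prov T (a.imp a) := trans (a1 a (Fml.const 1)) (top_imp one a)

theorem weaken {b : Fml} (a : Fml) (h : Prov T b) : Prov T (a.imp b) := .mp h (a1 b a)

theorem imp_anti {a b : Fml} (c : Fml) (h : Prov T (a.imp b)) :
    Prov T ((b.imp c).imp (a.imp c)) := .mp h (a2 a b c)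

theorem imp_mono {b c : Fml} (a : Fml) (h : Prov T (b.imp c)) :
    Prov T ((a.imp b).imp (a.imp c)) := trans (a2 a b c) (top_imp h _)

theorem nn1 (a : Fml) : Prov T (a.neg.neg.imp a) :=
  trans (a1 _ (Fml.const 1).neg.neg)
    (trans (a4 _ _) (trans (a4 _ _) (top_imp one a)))

theorem nn2 (a : Fml) : Prov T (a.imp a.neg.neg) := .mp (nn1 a.neg) (a4 _ _)

theorem contra {a b : Fml} (h : Prov T (a.imp b)) : Prov T (b.neg.imp a.neg) :=
  .mp (trans (nn1 a) (trans h (nn2 b))) (a4 _ _)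

theorem mono {T' : Set Fml} (hT : T ⊆ T') {a : Fml} (h : Prov T a) : Prov T' a := by
  induction h with
  | ax h => exact .ax h
  | hyp h => exact .hyp (hT h)
  | mp _ _ h1 h2 => exact .mp h1 h2

end Prov

/-- Provable equivalence. -/
def ltSetoid (T : Set Fml) : Setoid Fml where
  r a b := Prov T (a.imp b) ∧ Prov T (b.imp a)
  iseqv := ⟨fun a => ⟨.refl a, .refl a⟩, fun h => ⟨h.2, h.1⟩,
    fun h1 h2 => ⟨h1.1.trans h2.1, h2.2.trans h1.2⟩⟩

/-- The Lindenbaum algebra. -/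
def LindAlg (T : Set Fml) : Type := Quotient (ltSetoid T)

namespace LindAlg

variable {T : Set Fml}

/-- The class of a formula. -/
def mk (T : Set Fml) (a : Fml) : LindAlg T := Quotient.mk (ltSetoid T) a

theorem mk_eq {a b : Fml} : mk T a = mk T b ↔ Prov T (a.imp b) ∧ Prov T (b.imp a) :=
  Quotient.eq (r := ltSetoid T)

theorem mk_eq_one {a : Fml} : mk T a = mk T (Fml.const 1) ↔ Prov T a := by
  rw [mk_eq]
  exact ⟨fun h => .mp .one h.2, fun h => ⟨.weaken _ .one, .weaken _ h⟩⟩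

instance : Waj (LindAlg T) where
  imp := Quotient.map₂ Fml.imp (fun _ _ h1 _ _ h2 =>
    ⟨(Prov.imp_anti _ h1.2).trans (Prov.imp_mono _ h2.1),
     (Prov.imp_anti _ h1.1).trans (Prov.imp_mono _ h2.2)⟩)
  neg := Quotient.map Fml.neg (fun _ _ h => ⟨Prov.contra h.2, Prov.contra h.1⟩)
  one := mk T (Fml.const 1)
  w1 := by
    rintro ⟨a⟩
    exact mk_eq.2 ⟨Prov.top_imp .one a, Prov.a1 a _⟩
  a1 := by rintro ⟨a⟩ ⟨b⟩; exact mk_eq_one.2 (Prov.a1 a b)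
  a2 := by rintro ⟨a⟩ ⟨b⟩ ⟨c⟩; exact mk_eq_one.2 (Prov.a2 a b c)
  w3 := by rintro ⟨a⟩ ⟨b⟩; exact mk_eq.2 ⟨Prov.a3 a b, Prov.a3 b a⟩
  a4 := by rintro ⟨a⟩ ⟨b⟩; exact mk_eq_one.2 (Prov.a4 a b)

theorem mk_imp (a b : Fml) : mk T (a.imp b) = Waj.imp (mk T a) (mk T b) := rfl
theorem mk_neg (a : Fml) : mk T a.neg = Waj.neg (mk T a) := rfl
theorem eq_one {a : Fml} : mk T a = Waj.one ↔ Prov T a := mk_eq_one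

theorem mk_eqv {a b : Fml} (h : Prov T (a.eqv b)) : mk T a = mk T b := by
  have h := eq_one.2 h
  have h1 : mk T (a.eqv b) = Waj.mul (Waj.imp (mk T a) (mk T b))
      (Waj.imp (Waj.imp (mk T a) (mk T b)) (Waj.imp (mk T b) (mk T a))) := rfl
  rw [h1] at h
  apply Waj.antisymm
  · apply Waj.one_le; rw [← h]; exact Waj.mul_le_left _ _
  · apply Waj.one_le; rw [← h]; exact Waj.mp_le _ _

theorem const_imp (q r : UQ) :
    mk T (Fml.const (q.limp r)) = Waj.imp (mk T (Fml.const q)) (mk T (Fml.const r)) :=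
  (mk_eqv (.ax (.book_imp q r))).symm

theorem const_neg (q : UQ) : mk T (Fml.const q.lneg) = Waj.neg (mk T (Fml.const q)) :=
  (mk_eqv (.ax (.book_neg q))).symm

theorem const_one : mk T (Fml.const 1) = Waj.one := rfl

theorem const_zero : mk T (Fml.const 0) = Waj.neg Waj.one := by
  have h : mk T (Fml.const 0).neg = Waj.one := eq_one.2 (.ax .book_zero)
  rw [mk_neg] at h
  rw [← h, Waj.nn]

/-- Adding a disjunct to a proof. -/
theorem sup_of_insert {X ψ : Fml} (y : LindAlg T) (hy : Waj.sup y (mk T X) = Waj.one)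
    (h : Prov (insert X T) ψ) : Waj.sup y (mk T ψ) = Waj.one := by
  have aux : ∀ {χ : Fml}, Prov T χ → Waj.sup y (mk T χ) = Waj.one := by
    intro χ hχ
    rw [eq_one.2 hχ]
    exact Waj.one_le (Waj.le_sup_right _ _)
  induction h with
  | ax h => exact aux (.ax h)
  | hyp h =>
    rcases h with rfl | h
    · exact hy
    · exact aux (.hyp h)
  | mp _ _ ih1 ih2 => exact Waj.sup_mp _ _ _ ih1 ih2

theorem prime_step {a b φ : Fml} (h1 : Prov (insert (a.imp b) T) φ)
    (h2 : Prov (insert (b.imp a) T) φ) : Prov T φ := by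
  have e1 : Waj.sup (mk T (b.imp a)) (mk T φ) = Waj.one := by
    apply sup_of_insert _ _ h1
    rw [mk_imp, mk_imp]; exact Waj.prelin _ _
  have e2 : Waj.sup (mk T φ) (mk T φ) = Waj.one := by
    apply sup_of_insert _ _ h2
    rw [Waj.sup_comm]; exact e1
  rw [Waj.sup_self] at e2
  exact eq_one.1 e2

end LindAlg

/-! ### Prime extension -/

theorem prov_sUnion {c : Set (Set Fml)} (hc : IsChain (· ⊆ ·) c) (hne : c.Nonempty) {ψ : Fml}
    (h : Prov (⋃₀ c) ψ) : ∃ T ∈ c, Prov T ψ := by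
  induction h with
  | ax h => exact ⟨_, hne.some_mem, .ax h⟩
  | hyp h =>
    obtain ⟨T, hT, h⟩ := h
    exact ⟨T, hT, .hyp h⟩
  | mp _ _ h1 h2 =>
    obtain ⟨T1, hT1, h1⟩ := h1
    obtain ⟨T2, hT2, h2⟩ := h2
    rcases hc.total hT1 hT2 with h | h
    · exact ⟨T2, hT2, .mp (h1.mono h) h2⟩
    · exact ⟨T1, hT1, .mp h1 (h2.mono h)⟩

theorem exists_prime {Γ : Set Fml} {φ : Fml} (h : ¬ Prov Γ φ) :
    ∃ T, Γ ⊆ T ∧ ¬ Prov T φ ∧ ∀ a b : Fml, Prov T (a.imp b) ∨ Prov T (b.imp a) := by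
  obtain ⟨T, hΓT, hT⟩ := zorn_subset_nonempty {T | ¬ Prov T φ} (by
    intro c hcS hc hne
    refine ⟨⋃₀ c, fun hp => ?_, fun s hs => Set.subset_sUnion_of_mem hs⟩
    obtain ⟨T, hT, hp⟩ := prov_sUnion hc hne hp
    exact hcS hT hp) Γ h
  refine ⟨T, hΓT, hT.1, fun a b => ?_⟩
  have key : ∀ X, ¬ Prov T X → Prov (insert X T) φ := by
    intro X hX
    by_contra hcon
    have := hT.2 hcon (Set.subset_insert X T)
    exact hX (.hyp (this (Set.mem_insert X T)))
  by_contra hcon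
  push Not at hcon
  exact hT.1 (LindAlg.prime_step (key _ hcon.1) (key _ hcon.2))

/-! ### Completeness -/

open Waj Waj.ChG

/-- The Lindenbaum algebra of a prime consistent theory is a chain. -/
@[reducible] def LindAlg.chain {T : Set Fml} {φ : Fml} (hφ : ¬ Prov T φ)
    (hT : ∀ a b : Fml, Prov T (a.imp b) ∨ Prov T (b.imp a)) : WajChain (LindAlg T) where
  total := by
    rintro ⟨a⟩ ⟨b⟩
    rcases hT a b with h | h
    · exact Or.inl (LindAlg.eq_one.2 h)
    · exact Or.inr (LindAlg.eq_one.2 h)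
  nontriv := by
    intro h
    apply hφ
    apply LindAlg.eq_one.1
    apply Waj.one_le
    rw [h]; exact Waj.zero_le _

/-- Additivity of the constants. -/
theorem const_additive {G : Type*} [AddCommGroup G] (u : G) (c : UQ → G) (h1 : c 1 = u)
    (hadd : ∀ q r s : UQ, s.1 = q.1 + r.1 → c s = c q + c r) (h : G →+ ℝ) (hu : h u = 1)
    (q : UQ) : h (c q) = (q.1 : ℝ) := by
  obtain ⟨q, hq0, hq1⟩ := q
  have hd : (0 : ℚ) < q.den := by exact_mod_cast q.den_pos
  have hd1 : (1 : ℚ) ≤ q.den := by exact_mod_cast q.den_pos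
  have c0 : h (c 0) = 0 := by
    have := hadd 0 0 0 (by simp [show ((0 : UQ) : ℚ) = 0 from rfl])
    have h2 := congrArg h this
    rw [map_add] at h2
    linarith
  have hb : ∀ k : ℕ, k ≤ q.den → 0 ≤ (k : ℚ) / q.den ∧ (k : ℚ) / q.den ≤ 1 := by
    intro k hk
    refine ⟨by positivity, ?_⟩
    rw [div_le_one hd]; exact_mod_cast hk
  have key : ∀ (k : ℕ) (hk : k ≤ q.den), h (c ⟨(k : ℚ) / q.den, hb k hk⟩) =
      k * h (c ⟨((1 : ℕ) : ℚ) / q.den, hb 1 q.den_pos⟩) := by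
    intro k
    induction k with
    | zero =>
      intro hk
      have : (⟨((0 : ℕ) : ℚ) / q.den, hb 0 hk⟩ : UQ) = 0 := by
        apply Subtype.ext
        show ((0 : ℕ) : ℚ) / q.den = 0
        simp
      rw [this, c0]; simp
    | succ k ih =>
      intro hk
      rw [hadd ⟨(k : ℚ) / q.den, hb k (by omega)⟩ ⟨((1 : ℕ) : ℚ) / q.den, hb 1 q.den_pos⟩ _
        (by simp only; push_cast; ring), map_add, ih (by omega)]
      push_cast; ring
  have hfull := key q.den le_rfl
  have e1 : (⟨(q.den : ℚ) / q.den, hb q.den le_rfl⟩ : UQ) = 1 := by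
    apply Subtype.ext
    show (q.den : ℚ) / q.den = 1
    exact div_self hd.ne'
  rw [e1, h1, hu] at hfull
  have hnum : 0 ≤ q.num := Rat.num_nonneg.2 hq0
  obtain ⟨n, hn⟩ := Int.eq_ofNat_of_zero_le hnum
  have hqn : q = (n : ℚ) / q.den := by
    conv_lhs => rw [← Rat.num_div_den q, hn]
    simp
  have hnd : n ≤ q.den := by
    have : (n : ℚ) / q.den ≤ 1 := hqn ▸ hq1
    rw [div_le_one hd] at this
    exact_mod_cast this
  have e2 : (⟨q, hq0, hq1⟩ : UQ) = ⟨(n : ℚ) / q.den, hb n hnd⟩ := Subtype.ext hqn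
  have hdR : (q.den : ℝ) ≠ 0 := by exact_mod_cast hd.ne'
  rw [e2, key n hnd]
  push_cast
  field_simp
  push_cast at hfull
  linear_combination (-(n : ℝ)) * hfull

/-- Subformulas. -/
def Fml.sub : Fml → Set Fml
  | .var n => {.var n}
  | .const q => {.const q}
  | .neg a => insert (.neg a) a.sub
  | .imp a b => insert (.imp a b) (a.sub ∪ b.sub)

theorem Fml.sub_finite (a : Fml) : a.sub.Finite := by
  induction a with
  | var n => exact Set.finite_singleton _
  | const q => exact Set.finite_singleton _
  | neg a ih => exact ih.insert _
  | imp a b iha ihb => exact (iha.union ihb).insert _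

theorem Fml.self_mem_sub (a : Fml) : a ∈ a.sub := by
  cases a <;> simp [Fml.sub]

theorem exists_countermodel {Γ : Set Fml} (hfin : Γ.Finite) {φ : Fml} (h : ¬ Prov Γ φ) :
    ∃ v : ℕ → ℝ, IsAssignment v ∧ (∀ ψ ∈ Γ, eval v ψ = 1) ∧ eval v φ ≠ 1 := by
  classical
  obtain ⟨T, hΓ, hφ, hT⟩ := exists_prime h
  letI := LindAlg.chain hφ hT
  let E : Fml → ChG (LindAlg T) := fun a => emb (LindAlg.mk T a)
  have hE0 : ∀ a, 0 ≤ E a := fun a => by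
    have := emb_mono (zero_le (LindAlg.mk T a))
    rwa [emb_zero] at this
  have hEu : ∀ a, E a ≤ u := fun a => by
    have := emb_mono (le_one (LindAlg.mk T a))
    rwa [emb_one] at this
  have hu0 : (0 : ChG (LindAlg T)) < u := by
    apply lt_of_le_of_ne
    · exact (hE0 φ).trans (hEu φ)
    · intro h0
      rw [← emb_zero, ← emb_one] at h0
      exact WajChain.nontriv (emb_inj h0).symm
  let S : Set Fml := (⋃ ψ ∈ Γ, ψ.sub) ∪ φ.sub
  have hS : S.Finite := (hfin.biUnion fun ψ _ => ψ.sub_finite).union φ.sub_finite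
  let Q : Finset (ChG (LindAlg T)) := insert 0 (insert u (hS.toFinset.image E))
  have hQ0 : (0 : ChG (LindAlg T)) ∈ Q := by simp [Q]
  have hQu : (u : ChG (LindAlg T)) ∈ Q := by simp [Q]
  have hQE : ∀ a ∈ S, E a ∈ Q := fun a ha => by
    apply Finset.mem_insert_of_mem
    apply Finset.mem_insert_of_mem
    exact Finset.mem_image_of_mem _ (hS.mem_toFinset.2 ha)
  let P : Finset (ChG (LindAlg T)) := ((Q ×ˢ Q).image fun p => p.1 - p.2).filter (0 < ·)
  obtain ⟨g, hg⟩ := exists_pos_functional P (fun p hp => (Finset.mem_filter.1 hp).2)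
  have hglt : ∀ x ∈ Q, ∀ y ∈ Q, x < y → g x < g y := by
    intro x hx y hy hxy
    have : y - x ∈ P := by
      apply Finset.mem_filter.2
      refine ⟨Finset.mem_image.2 ⟨(y, x), Finset.mem_product.2 ⟨hy, hx⟩, rfl⟩, ?_⟩
      exact sub_pos.2 hxy
    have := hg _ this
    rw [map_sub] at this
    linarith
  have hgu : 0 < g u := by
    have := hglt 0 hQ0 u hQu hu0
    rwa [map_zero] at this
  let k : ChG (LindAlg T) →+ ℝ := (AddMonoidHom.mulLeft (g u)⁻¹).comp g
  have hk : ∀ x, k x = (g u)⁻¹ * g x := fun _ => rfl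
  have hku : k u = 1 := by rw [hk]; exact inv_mul_cancel₀ hgu.ne'
  have hklt : ∀ x ∈ Q, ∀ y ∈ Q, x < y → k x < k y := by
    intro x hx y hy hxy
    rw [hk, hk]
    exact mul_lt_mul_of_pos_left (hglt x hx y hy hxy) (inv_pos.2 hgu)
  have hkle : ∀ x ∈ Q, ∀ y ∈ Q, x ≤ y → k x ≤ k y := by
    intro x hx y hy hxy
    rcases hxy.eq_or_lt with h | h
    · rw [h]
    · exact (hklt x hx y hy h).le
  have hconst : ∀ q : UQ, k (E (Fml.const q)) = (q.1 : ℝ) := by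
    intro q
    apply const_additive u (fun q => E (Fml.const q)) (emb_one) _ k hku
    intro q r s hs
    have hq := q.2
    have hr := r.2
    have hs' := s.2
    have e1 : UQ.limp r q.lneg = 1 := by
      apply Subtype.ext
      show min 1 (1 - r.1 + (1 - q.1)) = 1
      apply min_eq_left; linarith
    have e2 : UQ.limp q.lneg r = s := by
      apply Subtype.ext
      show min 1 (1 - (1 - q.1) + r.1) = s.1
      rw [min_eq_right] <;> linarith
    have hle : L (LindAlg.mk T (Fml.const r)) (LindAlg.mk T (Fml.const q.lneg)) := by
      unfold L
      rw [← LindAlg.const_imp, e1, LindAlg.const_one]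
    have := emb_imp_of_le hle
    rw [← LindAlg.const_imp, e2, LindAlg.const_neg, emb_neg] at this
    show emb _ = emb _ + emb _
    have h2 := eq_sub_of_add_eq this
    rw [h2]; abel
  let v : ℕ → ℝ := fun n => max 0 (min 1 (k (E (Fml.var n))))
  have hv : IsAssignment v := fun n =>
    ⟨le_max_left _ _, max_le zero_le_one (min_le_left _ _)⟩
  have heval : ∀ ψ : Fml, ψ.sub ⊆ S → eval v ψ = k (E ψ) := by
    intro ψ
    induction ψ with
    | var n =>
      intro hs
      have hm : E (Fml.var n) ∈ Q := hQE _ (hs (Fml.self_mem_sub _))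
      have h0 := hkle 0 hQ0 _ hm (hE0 _)
      have h1 := hkle _ hm u hQu (hEu _)
      rw [map_zero] at h0
      rw [hku] at h1
      show max 0 (min 1 (k (E (Fml.var n)))) = _
      rw [min_eq_right h1, max_eq_right h0]
    | const q => intro _; exact (hconst q).symm
    | neg a ih =>
      intro hs
      have ha := ih ((Set.subset_insert _ _).trans hs)
      simp only [eval]
      rw [ha, show E a.neg = u - E a from emb_neg (LindAlg.mk T a), map_sub, hku]
    | imp a b iha ihb =>
      intro hs
      have hsa : a.sub ⊆ S :=
        Set.subset_union_left.trans ((Set.subset_insert _ _).trans hs)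
      have hsb : b.sub ⊆ S :=
        Set.subset_union_right.trans ((Set.subset_insert _ _).trans hs)
      have ha := iha hsa
      have hb := ihb hsb
      have hma := hQE a (hsa (Fml.self_mem_sub _))
      have hmb := hQE b (hsb (Fml.self_mem_sub _))
      simp only [eval]
      rw [ha, hb]
      rcases WajChain.total (LindAlg.mk T a) (LindAlg.mk T b) with hab | hab
      · have e : E (a.imp b) = u := by
          show emb (LindAlg.mk T (a.imp b)) = u
          rw [LindAlg.mk_imp, show imp (LindAlg.mk T a) (LindAlg.mk T b) = one from hab, emb_one]
        have := hkle _ hma _ hmb (emb_mono hab)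
        rw [e, hku]
        apply min_eq_left; linarith
      · have e : E (a.imp b) + E a = u + E b := emb_imp_of_le hab
        have e2 := congrArg k e
        rw [map_add, map_add, hku] at e2
        have := hkle _ hmb _ hma (emb_mono hab)
        rw [min_eq_right] <;> linarith
  refine ⟨v, hv, fun ψ hψ => ?_, ?_⟩
  · rw [heval ψ (fun x hx => Or.inl (Set.mem_biUnion hψ hx))]
    have : E ψ = u := by
      show emb (LindAlg.mk T ψ) = u
      rw [LindAlg.eq_one.2 (.hyp (hΓ hψ)), emb_one]
    rw [this, hku]
  · rw [heval φ (fun x hx => Or.inr hx)]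
    have hne : E φ ≠ u := by
      intro he
      rw [← emb_one] at he
      exact hφ (LindAlg.eq_one.1 (emb_inj he))
    have := hklt _ (hQE φ (Or.inr (Fml.self_mem_sub _))) u hQu (lt_of_le_of_ne (hEu φ) hne)
    rw [hku] at this
    exact this.ne

/-- finite strong standard completeness for RPL: for a finite set
`Γ ∪ {φ}` of formulas of the language of RPL, `Γ ⊢_RPL φ` iff every assignment into
`[0,1]_Ł` (constants interpreted canonically) making all of `Γ` true makes `φ` true. -/
theorem rpl_finite_strong_standard_completeness (Γ : Set Fml) (φ : Fml)
    (hfin : Γ.Finite) :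
    RPLProv Γ φ ↔
      ∀ v : ℕ → ℝ, IsAssignment v → (∀ ψ ∈ Γ, eval v ψ = 1) → eval v φ = 1 := by
  constructor
  · intro h v hv hΓ
    exact rpl_sound h hv hΓ
  · intro h
    by_contra hcon
    have hP : ¬ Prov Γ φ := fun hp => hcon hp.toRPL
    obtain ⟨v, hv, hΓ, hne⟩ := exists_countermodel hfin hP
    exact hne (h v hv hΓ)
end

section
/- If f : [0,1]^n → [0,1] is a McNaughton function and the set { x̄ ∈ [0,1]^n : f(x̄) = 1 } is nonempty, then it contains a point all of whose coordinates are rational. -/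
/-- The unit cube `[0,1]^n`. -/
def Box (n : ℕ) : Set (Fin n → ℝ) := {x | ∀ i, x i ∈ Set.Icc (0 : ℝ) 1}

/-- An `n`-variable McNaughton function: a continuous function from `[0,1]^n` to `[0,1]`
such that there are finitely many affine polynomials with integer coefficients,
one of which agrees with `f` at each point of the cube. -/
def IsMcNaughton {n : ℕ} (f : (Fin n → ℝ) → ℝ) : Prop :=
  ContinuousOn f (Box n) ∧ (∀ x ∈ Box n, f x ∈ Set.Icc (0 : ℝ) 1) ∧
  ∃ P : Finset ((Fin n → ℤ) × ℤ), ∀ x ∈ Box n,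
    ∃ c ∈ P, f x = (∑ j, (c.1 j : ℝ) * x j) + (c.2 : ℝ)

open Filter Topology in
/-- Rational sequences converging to `r`, constant if `r = 1`. -/
theorem exists_rat_seq (r : ℝ) :
    ∃ q : ℕ → ℚ, Tendsto (fun k => (q k : ℝ)) atTop (𝓝 r) ∧ (r = 1 → ∀ k, q k = 1) := by
  by_cases h : r = 1
  · exact ⟨fun _ => 1, by simp [h], fun _ _ => rfl⟩
  · obtain ⟨u, -, -, hu⟩ := Real.exists_seq_rat_strictMono_tendsto r
    exact ⟨u, hu, fun h' => absurd h' h⟩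

open Filter Topology in
/-- `ℚ`-linear functionals fixing `1` and converging pointwise to the identity. -/
theorem exists_functionals :
    ∃ φ : ℕ → (ℝ →ₗ[ℚ] ℚ), (∀ k, φ k 1 = 1) ∧
      ∀ x : ℝ, Tendsto (fun k => ((φ k x : ℚ) : ℝ)) atTop (𝓝 x) := by
  have hli : LinearIndepOn ℚ id ({1} : Set ℝ) := LinearIndepOn.singleton (by simp)
  let b := Module.Basis.extend hli
  choose q hq hq1 using exists_rat_seq
  refine ⟨fun k => b.constr ℚ (fun j => q (b j) k), ?_, ?_⟩
  · intro k
    have h1 : (1 : ℝ) ∈ hli.extend (Set.subset_univ _) := hli.subset_extend _ rfl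
    have hb : b ⟨1, h1⟩ = 1 := Module.Basis.extend_apply_self hli _
    have := b.constr_basis ℚ (fun j => q (b j) k) ⟨1, h1⟩
    rw [hb] at this
    rw [this]
    exact hq1 1 rfl k
  · intro x
    have hx : x = ∑ j ∈ (b.repr x).support, ((b.repr x j : ℚ) : ℝ) * b j := by
      conv_lhs => rw [← b.linearCombination_repr x]
      simp [Finsupp.linearCombination_apply, Finsupp.sum, Rat.smul_def]
    have key : Tendsto (fun k => ∑ j ∈ (b.repr x).support,
        ((b.repr x j : ℚ) : ℝ) * ((q (b j) k : ℚ) : ℝ)) atTop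
        (𝓝 (∑ j ∈ (b.repr x).support, ((b.repr x j : ℚ) : ℝ) * b j)) :=
      tendsto_finsetSum _ fun j _ => (hq (b j)).const_mul _
    rw [← hx] at key
    refine key.congr fun k => ?_
    rw [Module.Basis.constr_apply]
    simp [Finsupp.sum]

open Filter Topology in
/-- if `f` is a McNaughton function and `{ x̄ ∈ [0,1]^n : f(x̄) = 1 }` is
nonempty, then it contains a point all of whose coordinates are rational. -/
theorem mcnaughton_one_set_has_rational_point {n : ℕ} (f : (Fin n → ℝ) → ℝ)
    (hf : IsMcNaughton f) (hne : ∃ x ∈ Box n, f x = 1) :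
    ∃ x ∈ Box n, f x = 1 ∧ ∀ i, ∃ r : ℚ, x i = (r : ℝ) := by
  obtain ⟨hc, -, P, hP⟩ := hf
  obtain ⟨x, hx, hfx⟩ := hne
  obtain ⟨φ, h1, hφ⟩ := exists_functionals
  let y : ℕ → Fin n → ℝ := fun k i => ((φ k (x i) : ℚ) : ℝ)
  have hy : Tendsto y atTop (𝓝 x) := tendsto_pi_nhds.2 fun i => hφ (x i)
  have hbox : ∀ᶠ k in atTop, y k ∈ Box n := by
    refine eventually_all.2 fun i => ?_
    obtain ⟨h0, h2⟩ := hx i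
    refine Filter.Eventually.and ?_ ?_
    · rcases h0.eq_or_lt with h | h
      · exact Eventually.of_forall fun k => by simp [y, ← h]
      · exact ((hφ (x i)).eventually (lt_mem_nhds h)).mono fun k hk => le_of_lt hk
    · rcases h2.eq_or_lt with h | h
      · exact Eventually.of_forall fun k => by simp [y, h, h1]
      · exact ((hφ (x i)).eventually (gt_mem_nhds h)).mono fun k hk => le_of_lt hk
  have hfy : Tendsto (fun k => f (y k)) atTop (𝓝 1) := by
    rw [← hfx]
    exact (hc x hx).tendsto.comp (tendsto_nhdsWithin_iff.2 ⟨hy, hbox⟩)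
  have hgood : ∀ᶠ k in atTop, ∀ c ∈ P,
      f (y k) = (∑ j, (c.1 j : ℝ) * y k j) + (c.2 : ℝ) → f (y k) = 1 := by
    refine (Finset.eventually_all P).2 fun c _ => ?_
    by_cases h : (∑ j, (c.1 j : ℝ) * x j) + (c.2 : ℝ) = 1
    · refine Eventually.of_forall fun k hk => ?_
      rw [hk]
      have h' := congrArg (φ k) h
      have hm : ∀ (m : ℤ) (r : ℝ), φ k ((m : ℝ) * r) = m * φ k r := fun m r => by
        rw [← zsmul_eq_mul, map_zsmul, zsmul_eq_mul]
      have hm1 : φ k (c.2 : ℝ) = c.2 := by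
        have := hm c.2 1
        rwa [h1, mul_one, mul_one] at this
      rw [map_add, map_sum, h1, hm1] at h'
      simp only [hm] at h'
      have h'' := congrArg (fun r : ℚ => (r : ℝ)) h'
      push_cast at h''
      exact h''
    · have hcy : Tendsto (fun k => (∑ j, (c.1 j : ℝ) * y k j) + (c.2 : ℝ)) atTop
          (𝓝 ((∑ j, (c.1 j : ℝ) * x j) + (c.2 : ℝ))) :=
        (tendsto_finsetSum _ fun j _ => (hφ (x j)).const_mul _).add_const _
      exact ((hfy.sub hcy).eventually_ne (sub_ne_zero.2 (Ne.symm h))).mono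
        fun k hk he => absurd (sub_eq_zero.2 he) hk
  obtain ⟨k, hk1, hk2⟩ := (hbox.and hgood).exists
  obtain ⟨c, hcP, hcf⟩ := hP _ hk1
  exact ⟨y k, hk1, hk2 c hcP hcf, fun i => ⟨φ k (x i), rfl⟩⟩
end
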